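/- arXiv:2603.08510 — 2 statements merged into one kernel-verified Lean document; each statement's English description precedes it below -/
import Mathlib

section
/- For every integer n ≥ 0, the number of overpartitions of 11(8n+5) is divisible by 11, i.e. p̄(11(8n+5)) ≡ 0 (mod 11). -/
/-- Number of overpartitions of `n`: pairs of a partition of `k ≤ n` into distinct parts
together with an ordinary partition of `n - k`. -/
def overpartition (n : ℕ) : ℕ :=
  ∑ k ∈ Finset.range (n + 1),
    (Nat.Partition.distincts k).card * Fintype.card (Nat.Partition (n - k))

/-!
Write `f` for `∏ (1 - q ^ n)` and `P` for the generating function of overpartitions, so that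
`P(q) = f(q ^ 2) / f(q) ^ 2 = φ(q) P(q ^ 2) ^ 2`, with `φ` and `ψ` Ramanujan's theta functions.
Three successive bisections give `∑ p̄(8 n + 7) q ^ n = 64 ψ ^ 7 P ^ 8`, and as eta quotients
`f(q) ^ 33 ψ ^ 7 P ^ 8 = f(q ^ 2) ^ 22 f(q) ^ 10`. Modulo 11, both `f(q) ^ 33` and `f(q ^ 2) ^ 22`
are power series in `q ^ 11`. Since `11 (8 n + 5) = 8 (11 n + 6) + 7`, it remains to see that the
coefficients of `q ^ (11 n + 6)` in `f ^ 10` vanish modulo 11.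

Split `f` according to the residue of the exponent modulo 11. Euler's pentagonal number theorem
leaves six nonzero parts. By Jacobi's identity `f ^ 3 = ∑ (-1) ^ j (2 j + 1) q ^ (j (j + 1) / 2)`
only five parts of `f ^ 3` survive, so the other six, which are cubic polynomials in the parts of
`f`, are zero. These cubic relations force the part of `f ^ 10 = f ^ 3 f ^ 3 f ^ 3 f` in class 6 to
vanish.
-/

open PowerSeries Finset

namespace OverpartitionCongruence

section JacobiTripleProduct

variable {B : Type*} [CommRing B]

/-- The Gaussian binomial coefficient `[N choose k]_q`, defined by the `q`-Pascal rule so that it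
makes sense in every commutative ring. -/
def gaussBinom (q : B) : ℕ → ℕ → B
  | _, 0 => 1
  | 0, _ + 1 => 0
  | N + 1, k + 1 => gaussBinom q N k + q ^ (k + 1) * gaussBinom q N (k + 1)

/-- The finite `q`-Pochhammer symbol `(q; q)_N`. -/
def qPochhammer (q : B) (N : ℕ) : B := ∏ i ∈ range N, (1 - q ^ (i + 1))

/-- The `k`-th term `q ^ (k (k - 1) / 2) * x ^ k` of the theta series, where `q = x * y`. It is
written as a monomial in `x` and `y`, so that no inverses are needed for negative `k`. -/
def thetaTerm (x y : B) : ℤ → B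
  | .ofNat n => (x * y) ^ n.choose 2 * x ^ n
  | .negSucc n => (x * y) ^ (n + 1).choose 2 * y ^ (n + 1)

theorem qPochhammer_succ (q : B) (N : ℕ) :
    qPochhammer q (N + 1) = qPochhammer q N * (1 - q ^ (N + 1)) :=
  prod_range_succ _ _

@[simp]
theorem gaussBinom_zero_right (q : B) (N : ℕ) : gaussBinom q N 0 = 1 := by
  cases N <;> rfl

theorem gaussBinom_succ_succ (q : B) (N k : ℕ) :
    gaussBinom q (N + 1) (k + 1) = gaussBinom q N k + q ^ (k + 1) * gaussBinom q N (k + 1) :=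
  rfl

theorem gaussBinom_eq_zero_of_lt (q : B) {N k : ℕ} (h : N < k) : gaussBinom q N k = 0 := by
  induction N generalizing k with
  | zero => cases k with
    | zero => exact absurd h (lt_irrefl 0)
    | succ k => rfl
  | succ N ih => cases k with
    | zero => omega
    | succ k => rw [gaussBinom_succ_succ, ih (by omega), ih (by omega), mul_zero, add_zero]

theorem gaussBinom_mul_qPochhammer (q : B) (k l : ℕ) :
    gaussBinom q (k + l) k * qPochhammer q k * qPochhammer q l = qPochhammer q (k + l) := by
  induction k generalizing l with
  | zero => simp [qPochhammer]
  | succ k ihk =>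
    induction l with
    | zero =>
      have h := ihk 0
      rw [add_zero] at h ⊢
      rw [gaussBinom_succ_succ, gaussBinom_eq_zero_of_lt q (lt_add_one k), qPochhammer_succ]
      linear_combination (1 - q ^ (k + 1)) * h
    | succ l ihl =>
      have h := ihk (l + 1)
      rw [show k + 1 + l = k + (l + 1) by omega] at ihl
      rw [show k + 1 + (l + 1) = k + (l + 1) + 1 by omega, gaussBinom_succ_succ,
        qPochhammer_succ q (k + (l + 1)), ← h]
      rw [← h] at ihl
      simp only [qPochhammer_succ] at ihl ⊢
      linear_combination q ^ (k + 1) * (1 - q ^ (l + 1)) * ihl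

theorem sum_gaussBinom_succ_mul (q : B) (N : ℕ) (t : ℕ → B) :
    ∑ k ∈ range (N + 2), gaussBinom q (N + 1) k * t k =
      ∑ k ∈ range (N + 1), gaussBinom q N k * (t (k + 1) + q ^ k * t k) := by
  have hlast : ∑ k ∈ range (N + 1), gaussBinom q N (k + 1) * (q ^ (k + 1) * t (k + 1)) + t 0 =
      ∑ k ∈ range (N + 1), gaussBinom q N k * (q ^ k * t k) := by
    rw [sum_range_succ, gaussBinom_eq_zero_of_lt q (lt_add_one N), zero_mul, add_zero,
      sum_range_succ' _ N, gaussBinom_zero_right, pow_zero, one_mul, one_mul]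
  rw [sum_range_succ', gaussBinom_zero_right, one_mul]
  simp only [mul_add, sum_add_distrib, ← hlast, gaussBinom_succ_succ, add_mul]
  rw [add_assoc]
  congr 2
  exact sum_congr rfl fun k _ => by ring

theorem prod_one_add_mul_pow (q x : B) (n : ℕ) :
    ∏ i ∈ range n, (1 + x * q ^ i) =
      ∑ k ∈ range (n + 1), gaussBinom q n k * (q ^ k.choose 2 * x ^ k) := by
  induction n generalizing x with
  | zero => simp
  | succ n ih =>
    have hshift : ∏ i ∈ range n, (1 + x * q ^ (i + 1)) = ∏ i ∈ range n, (1 + x * q * q ^ i) :=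
      prod_congr rfl fun i _ => by ring
    rw [prod_range_succ', hshift, ih, sum_gaussBinom_succ_mul, sum_mul]
    refine sum_congr rfl fun k _ => ?_
    rw [Nat.choose_succ_succ', Nat.choose_one_right]
    ring

theorem thetaTerm_natCast (x y : B) (n : ℕ) :
    thetaTerm x y n = (x * y) ^ n.choose 2 * x ^ n :=
  rfl

theorem thetaTerm_neg_natCast (x y : B) (n : ℕ) :
    thetaTerm x y (-n) = (x * y) ^ n.choose 2 * y ^ n := by
  cases n with
  | zero => simp [thetaTerm]
  | succ n => rfl

theorem pow_mul_thetaTerm_sub_one (x y : B) (k m : ℕ) :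
    (x * y) ^ k * thetaTerm x y (k - m - 1) = y * (x * y) ^ m * thetaTerm x y (k - m) := by
  rcases lt_or_ge m k with h | h
  · obtain ⟨j, rfl⟩ := Nat.exists_eq_add_of_lt h
    rw [show ((m + j + 1 : ℕ) : ℤ) - m - 1 = j by push_cast; ring,
      show ((m + j + 1 : ℕ) : ℤ) - m = (j + 1 : ℕ) by push_cast; ring,
      thetaTerm_natCast, thetaTerm_natCast, Nat.choose_succ_succ', Nat.choose_one_right]
    ring
  · obtain ⟨j, rfl⟩ := Nat.exists_eq_add_of_le h
    rw [show (k : ℤ) - (k + j : ℕ) - 1 = -(j + 1 : ℕ) by push_cast; ring,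
      show (k : ℤ) - (k + j : ℕ) = -(j : ℕ) by push_cast; ring,
      thetaTerm_neg_natCast, thetaTerm_neg_natCast, Nat.choose_succ_succ', Nat.choose_one_right]
    ring

theorem finite_jacobi_triple_product (x y : B) (n m : ℕ) :
    (∏ i ∈ range n, (1 + x * (x * y) ^ i)) * ∏ i ∈ range m, (1 + y * (x * y) ^ i) =
      ∑ k ∈ range (n + m + 1), gaussBinom (x * y) (n + m) k * thetaTerm x y (k - m) := by
  induction m with
  | zero =>
    simp only [range_zero, prod_empty, mul_one, add_zero, Nat.cast_zero, sub_zero,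
      thetaTerm_natCast]
    exact prod_one_add_mul_pow (x * y) x n
  | succ m ih =>
    rw [prod_range_succ, ← mul_assoc, ih, ← add_assoc, sum_gaussBinom_succ_mul, sum_mul]
    refine sum_congr rfl fun k _ => ?_
    rw [show ((k + 1 : ℕ) : ℤ) - (m + 1 : ℕ) = k - m by push_cast; ring,
      show (k : ℤ) - (m + 1 : ℕ) = k - m - 1 by push_cast; ring, pow_mul_thetaTerm_sub_one]
    ring

theorem sum_range_sub_eq_symm (T : ℤ → B) (m : ℕ) :
    ∑ k ∈ range (m + m + 1), T (k - m) = T 0 + ∑ j ∈ range m, (T (j + 1) + T (-(j + 1))) := by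
  induction m with
  | zero => simp
  | succ m ih =>
    have hshift (k : ℕ) : T ((k + 1 : ℕ) - (m + 1 : ℕ)) = T (k - m) := by
      congr 1; push_cast; ring
    rw [show m + 1 + (m + 1) + 1 = m + m + 1 + 1 + 1 by omega, sum_range_succ', sum_range_succ]
    simp only [hshift]
    rw [ih, sum_range_succ, show ((m + m + 1 : ℕ) : ℤ) - m = m + 1 by push_cast; ring,
      show ((0 : ℕ) : ℤ) - (m + 1 : ℕ) = -(m + 1) by push_cast; ring]
    ring

theorem dvd_mul_gaussBinom_sub_one {q F : B} (hF : IsUnit F)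
    (h : ∀ m, q ^ (m + 1) ∣ F - qPochhammer q m) (k l : ℕ) :
    q ^ (min k l + 1) ∣ F * gaussBinom q (k + l) k - 1 := by
  have hdvd {m : ℕ} (hm : min k l ≤ m) : q ^ (min k l + 1) ∣ F - qPochhammer q m :=
    (pow_dvd_pow q (by omega)).trans (h m)
  have hsplit : F * (F * gaussBinom q (k + l) k - 1) =
      (F - qPochhammer q k) * (F * gaussBinom q (k + l) k)
      + (F - qPochhammer q l) * (qPochhammer q k * gaussBinom q (k + l) k)
      - (F - qPochhammer q (k + l)) := by
    linear_combination gaussBinom_mul_qPochhammer q k l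
  rw [← hF.dvd_mul_left, hsplit]
  exact dvd_sub (dvd_add ((hdvd (by omega)).mul_right _) ((hdvd (by omega)).mul_right _))
    (hdvd (by omega))

theorem pow_dvd_mul_gaussBinom_sub_one_mul_thetaTerm {x y F : B} (hF : IsUnit F)
    (h : ∀ m, (x * y) ^ (m + 1) ∣ F - qPochhammer (x * y) m) {m k : ℕ} (hk : k ≤ m + m) :
    (x * y) ^ m ∣ (F * gaussBinom (x * y) (m + m) k - 1) * thetaTerm x y (k - m) := by
  have hbinom := dvd_mul_gaussBinom_sub_one hF h k (m + m - k)
  rw [Nat.add_sub_cancel' hk] at hbinom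
  obtain ⟨j, hj, hterm⟩ : ∃ j : ℕ, m ≤ min k (m + m - k) + j ∧
      (x * y) ^ j.choose 2 ∣ thetaTerm x y (k - m) := by
    rcases le_total m k with hle | hle
    · obtain ⟨j, rfl⟩ := Nat.exists_eq_add_of_le hle
      refine ⟨j, by omega, ?_⟩
      rw [show ((m + j : ℕ) : ℤ) - m = j by push_cast; ring, thetaTerm_natCast]
      exact dvd_mul_right _ _
    · obtain ⟨j, rfl⟩ := Nat.exists_eq_add_of_le hle
      refine ⟨j, by omega, ?_⟩
      rw [show (k : ℤ) - (k + j : ℕ) = -(j : ℕ) by push_cast; ring, thetaTerm_neg_natCast]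
      exact dvd_mul_right _ _
  have hchoose : j ≤ j.choose 2 + 1 := by
    cases j with
    | zero => omega
    | succ j => rw [Nat.choose_succ_succ', Nat.choose_one_right]; omega
  refine (pow_dvd_pow _ (by omega : m ≤ min k (m + m - k) + 1 + j.choose 2)).trans ?_
  rw [pow_add]
  exact mul_dvd_mul hbinom hterm

/-- The `m`-th partial sum of the theta series `∑ k, q ^ (k (k - 1) / 2) * x ^ k` over all integers
`k`, with the terms of index `±k` combined; here `q = x * y`. -/
def thetaSum (x y : B) (m : ℕ) : B :=
  1 + ∑ j ∈ range m, (x * y) ^ (j + 1).choose 2 * (x ^ (j + 1) + y ^ (j + 1))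

theorem jacobi_triple_product {x y F : B} (hF : IsUnit F)
    (h : ∀ m, (x * y) ^ (m + 1) ∣ F - qPochhammer (x * y) m) (m : ℕ) :
    (x * y) ^ m ∣ F * ((∏ i ∈ range m, (1 + x * (x * y) ^ i)) *
      ∏ i ∈ range m, (1 + y * (x * y) ^ i)) - thetaSum x y m := by
  have hsum : thetaSum x y m = ∑ k ∈ range (m + m + 1), thetaTerm x y (k - m) := by
    rw [thetaSum, sum_range_sub_eq_symm]
    congr 1
    · simp [thetaTerm]
    · refine sum_congr rfl fun j _ => ?_
      rw [← Nat.cast_succ, thetaTerm_natCast, thetaTerm_neg_natCast, ← mul_add]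
  rw [finite_jacobi_triple_product, hsum, mul_sum, ← sum_sub_distrib]
  refine dvd_sum fun k hk => ?_
  rw [← mul_assoc, ← sub_one_mul]
  exact pow_dvd_mul_gaussBinom_sub_one_mul_thetaTerm hF h (by have := mem_range.1 hk; omega)

end JacobiTripleProduct

section GeneratingFunctions

variable {R : Type*} [CommRing R]

local notation "V" => expand 2 two_ne_zero

theorem eq_of_forall_X_pow_dvd_sub {g h : R⟦X⟧} (H : ∀ m : ℕ, X ^ m ∣ g - h) : g = h := by
  ext n
  have hn := X_pow_dvd_iff.1 (H (n + 1)) n (lt_add_one n)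
  rwa [map_sub, sub_eq_zero] at hn

theorem X_pow_dvd_expand_sub {g h : R⟦X⟧} {m : ℕ} (H : X ^ m ∣ g - h) :
    X ^ m ∣ V g - V h := by
  have hV := map_dvd (V) H
  rw [map_pow, expand_X, ← pow_mul, map_sub] at hV
  exact (pow_dvd_pow X (by omega)).trans hV

theorem coeff_two_mul_add_one_expand (g : R⟦X⟧) (n : ℕ) : coeff (2 * n + 1) (V g) = 0 :=
  coeff_expand_of_not_dvd 2 two_ne_zero g (by omega)

theorem coeff_odd_of_eq_expand_add {g a b : R⟦X⟧} (h : g = V a + X * V b) (n : ℕ) :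
    coeff (2 * n + 1) g = coeff n b := by
  rw [h, map_add, coeff_two_mul_add_one_expand, coeff_succ_X_mul, coeff_expand_mul, zero_add]

theorem eq_zero_of_eq_neg_expand {g : R⟦X⟧} (h0 : constantCoeff g = 0) (h : g = -V g) :
    g = 0 := by
  ext n
  induction n using Nat.strong_induction_on with
  | _ n ih =>
    rcases Nat.even_or_odd' n with ⟨k, rfl | rfl⟩
    · rcases Nat.eq_zero_or_pos k with rfl | hk
      · simpa using h0
      · rw [h, map_neg, coeff_expand_mul, ih k (by omega), map_zero, neg_zero, map_zero]
    · rw [h, map_neg, coeff_two_mul_add_one_expand, neg_zero, map_zero]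

theorem X_pow_dvd_qPochhammer_add_sub (m l : ℕ) :
    X ^ (m + 1) ∣ qPochhammer (X : R⟦X⟧) (m + l) - qPochhammer X m := by
  induction l with
  | zero => simp
  | succ l ih =>
    rw [← add_assoc, qPochhammer_succ, mul_one_sub, sub_right_comm]
    exact dvd_sub ih ((pow_dvd_pow X (by omega)).mul_left _)

theorem X_pow_dvd_pentagonalSeries_sub (m : ℕ) :
    (X : R⟦X⟧) ^ (m + 1) ∣ pentagonalSeries R - qPochhammer X m := by
  rw [X_pow_dvd_iff]
  intro n hn
  obtain ⟨s, hs⟩ := Filter.eventually_atTop.1 (coeff_prod_one_sub_X_pow_eventually_eq R n)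
  obtain ⟨l, hl⟩ := s.exists_nat_subset_range
  have hlim := hs (range (m + l)) (hl.trans (range_subset_range.2 (by omega)))
  have hstable := X_pow_dvd_iff.1 (X_pow_dvd_qPochhammer_add_sub (R := R) m l) n hn
  rw [map_sub, ← hlim]
  rwa [map_sub] at hstable

local notation "𝐟" => pentagonalSeries R

theorem expand_qPochhammer (q : R⟦X⟧) (m : ℕ) :
    V (qPochhammer q m) = qPochhammer (V q) m := by
  simp [qPochhammer, map_prod]

theorem X_sq_pow_dvd_expand_pentagonalSeries_sub (m : ℕ) :
    ((X : R⟦X⟧) ^ 2) ^ (m + 1) ∣ V 𝐟 - qPochhammer (X ^ 2) m := by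
  have hV := map_dvd (V) (X_pow_dvd_pentagonalSeries_sub (R := R) m)
  rwa [map_sub, map_pow, expand_qPochhammer, expand_X] at hV

theorem X_pow_four_pow_dvd_expand_expand_pentagonalSeries_sub (m : ℕ) :
    ((X : R⟦X⟧) ^ 4) ^ (m + 1) ∣ V (V 𝐟) - qPochhammer (X ^ 4) m := by
  have hV := map_dvd (V) (X_sq_pow_dvd_expand_pentagonalSeries_sub (R := R) m)
  have hX : V ((X : R⟦X⟧) ^ 2) = X ^ 4 := by rw [map_pow, expand_X, ← pow_mul]
  rwa [map_sub, map_pow, expand_qPochhammer, hX] at hV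

variable (R) in
/-- The generating function of the number of partitions. -/
noncomputable def partitionSeries : R⟦X⟧ := mk fun n => (Fintype.card (Nat.Partition n) : R)

variable (R) in
/-- The generating function of the number of overpartitions. -/
noncomputable def overpartitionSeries : R⟦X⟧ := mk fun n => (overpartition n : R)

local notation "𝐩" => partitionSeries R

open PowerSeries.WithPiTopology in
theorem partitionSeries_mul_pentagonalSeries : 𝐩 * 𝐟 = 1 := by
  let _ : TopologicalSpace R := ⊥
  have _ : DiscreteTopology R := ⟨rfl⟩
  have hp := Nat.Partition.hasProd_powerSeriesMk_card_restricted R (fun _ => True)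
  have hfactor (i : ℕ) : (∑' j : ℕ, (X : R⟦X⟧) ^ ((i + 1) * j)) * (1 - X ^ (i + 1)) = 1 := by
    simp only [pow_mul]
    exact tsum_pow_mul_one_sub_of_constantCoeff_eq_zero (by simp)
  have hprod := hp.mul (hasProd_one_sub_X_pow R)
  simp only [if_true, hfactor] at hprod
  simpa [partitionSeries, Nat.Partition.restricted] using hprod.unique hasProd_one

open PowerSeries.WithPiTopology in
theorem hasProd_expand [TopologicalSpace R] {u : ℕ → R⟦X⟧} {g : R⟦X⟧} (h : HasProd u g) :
    HasProd (fun n => V (u n)) (V g) := by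
  rw [HasProd, tendsto_iff_coeff_tendsto] at h ⊢
  intro n
  simp only [← map_prod]
  rcases Nat.even_or_odd' n with ⟨k, rfl | rfl⟩
  · simpa only [coeff_expand_mul] using h k
  · simpa only [coeff_two_mul_add_one_expand] using tendsto_const_nhds

open PowerSeries.WithPiTopology in
theorem mk_card_distincts_mul_pentagonalSeries :
    (mk fun n => (#(Nat.Partition.distincts n) : R)) * 𝐟 = V 𝐟 := by
  let _ : TopologicalSpace R := ⊥
  have _ : DiscreteTopology R := ⟨rfl⟩
  have hprod := (Nat.Partition.hasProd_powerSeriesMk_card_countRestricted R two_pos).mul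
    (hasProd_one_sub_X_pow R)
  have hfactor (i : ℕ) : (∑ j ∈ range 2, (X : R⟦X⟧) ^ ((i + 1) * j)) * (1 - X ^ (i + 1)) =
      V (1 - X ^ (i + 1)) := by
    simp only [map_sub, map_one, map_pow, expand_X, sum_range_succ, sum_range_zero]
    ring
  simp only [Nat.Partition.countRestricted_two, hfactor] at hprod
  exact hprod.unique (hasProd_expand (hasProd_one_sub_X_pow R))

theorem overpartitionSeries_eq : overpartitionSeries R = V 𝐟 * 𝐩 ^ 2 := by
  have hconv : overpartitionSeries R = (mk fun n => (#(Nat.Partition.distincts n) : R)) * 𝐩 := by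
    ext n
    simp [overpartitionSeries, partitionSeries, overpartition, coeff_mul,
      Nat.sum_antidiagonal_eq_sum_range_succ_mk]
  rw [hconv, ← mk_card_distincts_mul_pentagonalSeries]
  linear_combination -(mk fun n => (#(Nat.Partition.distincts n) : R)) * 𝐩 *
    partitionSeries_mul_pentagonalSeries (R := R)

theorem coeff_overpartitionSeries (n : ℕ) :
    coeff n (overpartitionSeries R) = overpartition n :=
  coeff_mk _ _

theorem isUnit_pentagonalSeries : IsUnit 𝐟 :=
  .of_mul_eq_one_right _ partitionSeries_mul_pentagonalSeries

end GeneratingFunctions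

section RamanujanTheta

variable {R : Type*} [CommRing R]

local notation "V" => expand 2 two_ne_zero
local notation "𝐟" => pentagonalSeries R
local notation "𝐩" => partitionSeries R

variable (R) in
/-- Ramanujan's theta function `φ(q) = ∑ q ^ (n ^ 2)` over all integers `n`, defined by its product
`∏ (1 - q ^ (2 n)) ^ 5 / ((1 - q ^ n) ^ 2 (1 - q ^ (4 n)) ^ 2)`. -/
noncomputable def ramanujanPhi : R⟦X⟧ := V 𝐟 ^ 5 * 𝐩 ^ 2 * V (V 𝐩) ^ 2

variable (R) in
/-- Ramanujan's theta function `ψ(q) = ∑ q ^ (n (n + 1) / 2)` over `n ≥ 0`, defined by its product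
`∏ (1 - q ^ (2 n)) ^ 2 / (1 - q ^ n)`. -/
noncomputable def ramanujanPsi : R⟦X⟧ := V 𝐟 ^ 2 * 𝐩

variable (R) in
/-- The product of the factors `1 + q ^ (2 n + 1)` over `n ≥ 0`, in eta-quotient form. -/
noncomputable def oddProduct : R⟦X⟧ := V 𝐟 ^ 2 * 𝐩 * V (V 𝐩)

local notation "φ" => ramanujanPhi R
local notation "ψ" => ramanujanPsi R
local notation "𝐏" => overpartitionSeries R

theorem expand_partitionSeries_mul : V 𝐩 * V 𝐟 = 1 := by
  rw [← map_mul, partitionSeries_mul_pentagonalSeries, map_one]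

theorem expand_expand_partitionSeries_mul : V (V 𝐩) * V (V 𝐟) = 1 := by
  rw [← map_mul, expand_partitionSeries_mul, map_one]

theorem ramanujanPhi_eq_mul_oddProduct_sq : φ = V 𝐟 * oddProduct R ^ 2 := by
  rw [ramanujanPhi, oddProduct]
  ring

theorem ramanujanPsi_eq_mul_oddProduct : ψ = V (V 𝐟) * oddProduct R := by
  rw [ramanujanPsi, oddProduct]
  linear_combination -V 𝐟 ^ 2 * 𝐩 * expand_expand_partitionSeries_mul (R := R)

theorem overpartitionSeries_eq_ramanujanPhi_mul : 𝐏 = φ * V 𝐏 ^ 2 := by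
  calc 𝐏 = V 𝐟 * 𝐩 ^ 2 * (V 𝐩 * V 𝐟) ^ 4 * (V (V 𝐩) * V (V 𝐟)) ^ 2 := by
        rw [expand_partitionSeries_mul, expand_expand_partitionSeries_mul, overpartitionSeries_eq]
        ring
    _ = φ * V 𝐏 ^ 2 := by
        rw [overpartitionSeries_eq, ramanujanPhi, map_mul, map_pow]
        ring

theorem ramanujanPsi_sq : ψ ^ 2 = φ * V ψ := by
  calc ψ ^ 2 = V 𝐟 ^ 4 * 𝐩 ^ 2 * (V 𝐩 * V 𝐟) * (V (V 𝐩) * V (V 𝐟)) ^ 2 := by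
        rw [expand_partitionSeries_mul, expand_expand_partitionSeries_mul, ramanujanPsi]
        ring
    _ = φ * V ψ := by
        rw [ramanujanPsi, ramanujanPhi, map_mul, map_pow]
        ring

theorem prod_one_add_X_pow_mul_qPochhammer (m : ℕ) :
    (∏ i ∈ range m, (1 + (X : R⟦X⟧) ^ (2 * i + 1))) *
        (qPochhammer X (2 * m) * qPochhammer (X ^ 4) m) =
      qPochhammer (X ^ 2) (2 * m) * qPochhammer (X ^ 2) m := by
  induction m with
  | zero => simp [qPochhammer]
  | succ m ih =>
    simp only [show 2 * (m + 1) = 2 * m + 1 + 1 by ring, prod_range_succ, qPochhammer_succ]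
    linear_combination (1 + (X : R⟦X⟧) ^ (2 * m + 1)) * (1 - X ^ (2 * m + 1)) *
      (1 - X ^ (2 * m + 1 + 1)) * (1 - (X ^ 4) ^ (m + 1)) * ih

theorem X_pow_dvd_oddProduct_sub (m : ℕ) :
    X ^ m ∣ oddProduct R - ∏ i ∈ range m, (1 + X ^ (2 * i + 1)) := by
  have h1 : X ^ m ∣ 𝐟 - qPochhammer X (2 * m) :=
    (pow_dvd_pow X (by omega)).trans (X_pow_dvd_pentagonalSeries_sub (2 * m))
  have h2 {k : ℕ} (hk : m ≤ k) : X ^ m ∣ V 𝐟 - qPochhammer (X ^ 2) k :=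
    (by rw [← pow_mul]; exact pow_dvd_pow X (by omega) : X ^ m ∣ ((X : R⟦X⟧) ^ 2) ^ (k + 1)).trans
      (X_sq_pow_dvd_expand_pentagonalSeries_sub k)
  have h4 : X ^ m ∣ V (V 𝐟) - qPochhammer (X ^ 4) m :=
    (by rw [← pow_mul]; exact pow_dvd_pow X (by omega) : X ^ m ∣ ((X : R⟦X⟧) ^ 4) ^ (m + 1)).trans
      (X_pow_four_pow_dvd_expand_expand_pentagonalSeries_sub m)
  have hunit : IsUnit (𝐟 * V (V 𝐟)) :=
    isUnit_pentagonalSeries.mul ((isUnit_pentagonalSeries.map (V)).map (V))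
  have hnum : 𝐟 * V (V 𝐟) * oddProduct R = V 𝐟 ^ 2 := by
    rw [oddProduct]
    linear_combination V 𝐟 ^ 2 * partitionSeries_mul_pentagonalSeries (R := R) +
      V 𝐟 ^ 2 * 𝐟 * 𝐩 * expand_expand_partitionSeries_mul (R := R)
  have hdiff := dvd_sub (dvd_mul_sub_mul (h2 (k := 2 * m) (by omega)) (h2 le_rfl))
    ((dvd_mul_sub_mul h1 h4).mul_left (∏ i ∈ range m, (1 + X ^ (2 * i + 1))))
  rw [← hunit.dvd_mul_left]
  convert! hdiff using 1
  linear_combination hnum - prod_one_add_X_pow_mul_qPochhammer (R := R) m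

theorem two_mul_add_one_choose_two (n : ℕ) : 2 * (n + 1).choose 2 = n * (n + 1) := by
  rw [Nat.choose_two_right, Nat.mul_div_cancel' (Nat.even_mul_pred_self _).two_dvd,
    Nat.add_sub_cancel, mul_comm]

theorem thetaSum_X_X (m : ℕ) :
    thetaSum X X m = 1 + ∑ j ∈ range m, 2 * (X : R⟦X⟧) ^ ((j + 1) ^ 2) := by
  refine congrArg (1 + ·) (sum_congr rfl fun j _ => ?_)
  rw [← sq, ← pow_mul, two_mul_add_one_choose_two]
  ring

theorem thetaSum_X_X_cube (m : ℕ) :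
    thetaSum X (X ^ 3) m =
      1 + ∑ j ∈ range m, ((X : R⟦X⟧) ^ ((j + 1) * (2 * j + 1)) + X ^ ((j + 1) * (2 * j + 3))) := by
  refine congrArg (1 + ·) (sum_congr rfl fun j _ => ?_)
  rw [← pow_succ', ← pow_mul, show (3 + 1) * (j + 1).choose 2 = 2 * (2 * (j + 1).choose 2) by ring,
    two_mul_add_one_choose_two]
  ring

theorem X_pow_dvd_ramanujanPhi_sub (m : ℕ) : X ^ m ∣ φ - thetaSum X X m := by
  have hF (k : ℕ) : ((X : R⟦X⟧) * X) ^ (k + 1) ∣ V 𝐟 - qPochhammer (X * X) k := by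
    simpa only [← sq] using X_sq_pow_dvd_expand_pentagonalSeries_sub k
  have hprod : ∏ i ∈ range m, (1 + X * ((X : R⟦X⟧) * X) ^ i) =
      ∏ i ∈ range m, (1 + X ^ (2 * i + 1)) :=
    prod_congr rfl fun i _ => by ring
  have hjtp := jacobi_triple_product (isUnit_pentagonalSeries.map (V)) hF m
  rw [hprod] at hjtp
  have hO := X_pow_dvd_oddProduct_sub (R := R) m
  have h := dvd_add ((dvd_mul_sub_mul hO hO).mul_left (V 𝐟))
    ((pow_dvd_pow_of_dvd (dvd_mul_right X X) m).trans hjtp)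
  rwa [mul_sub, sub_add_sub_cancel, ← sq, ← ramanujanPhi_eq_mul_oddProduct_sq] at h

theorem prod_one_add_X_pow_two_mul (m : ℕ) :
    (∏ i ∈ range m, (1 + X * ((X : R⟦X⟧) * X ^ 3) ^ i)) *
        ∏ i ∈ range m, (1 + X ^ 3 * (X * X ^ 3) ^ i) =
      ∏ i ∈ range (2 * m), (1 + X ^ (2 * i + 1)) := by
  induction m with
  | zero => simp
  | succ m ih =>
    rw [show 2 * (m + 1) = 2 * m + 1 + 1 by ring]
    simp only [prod_range_succ, ← ih]
    ring

theorem X_pow_dvd_ramanujanPsi_sub (m : ℕ) : X ^ m ∣ ψ - thetaSum X (X ^ 3) m := by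
  have hF (k : ℕ) : ((X : R⟦X⟧) * X ^ 3) ^ (k + 1) ∣ V (V 𝐟) - qPochhammer (X * X ^ 3) k := by
    simpa only [← pow_succ'] using X_pow_four_pow_dvd_expand_expand_pentagonalSeries_sub k
  have hjtp := jacobi_triple_product ((isUnit_pentagonalSeries.map (V)).map (V)) hF m
  rw [prod_one_add_X_pow_two_mul] at hjtp
  have hO : X ^ m ∣ oddProduct R - ∏ i ∈ range (2 * m), (1 + X ^ (2 * i + 1)) :=
    (pow_dvd_pow X (by omega)).trans (X_pow_dvd_oddProduct_sub (2 * m))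
  have h := dvd_add (hO.mul_left (V (V 𝐟)))
    ((pow_dvd_pow_of_dvd (dvd_mul_right X (X ^ 3)) m).trans hjtp)
  rwa [mul_sub, sub_add_sub_cancel, ← ramanujanPsi_eq_mul_oddProduct] at h

-- The even squares give `φ(q ^ 4)`; the odd squares are `(4 j + 3) ^ 2` and `(4 j + 5) ^ 2`.
theorem thetaSum_X_X_four_mul_add_one (m : ℕ) :
    thetaSum (X : R⟦X⟧) X (4 * m + 1) =
      V (V (thetaSum X X (2 * m))) + 2 * X * V (V (V (thetaSum X (X ^ 3) m))) := by
  simp only [thetaSum_X_X, thetaSum_X_X_cube, map_add, map_one, map_sum, map_mul, map_ofNat,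
    map_pow, expand_X]
  induction m with
  | zero => simp
  | succ m ih =>
    rw [show 4 * (m + 1) + 1 = 4 * m + 1 + 1 + 1 + 1 + 1 by ring,
      show 2 * (m + 1) = 2 * m + 1 + 1 by ring]
    simp only [sum_range_succ] at ih ⊢
    linear_combination ih

theorem ramanujanPhi_dissection : φ = V (V φ) + 2 * X * V (V (V ψ)) := by
  refine eq_of_forall_X_pow_dvd_sub fun m => ?_
  have hφ : X ^ m ∣ φ - thetaSum X X (4 * m + 1) :=
    (pow_dvd_pow X (by omega)).trans (X_pow_dvd_ramanujanPhi_sub _)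
  have hVφ : X ^ m ∣ V (V φ) - V (V (thetaSum X X (2 * m))) :=
    X_pow_dvd_expand_sub (X_pow_dvd_expand_sub
      ((pow_dvd_pow X (by omega)).trans (X_pow_dvd_ramanujanPhi_sub _)))
  have hVψ : X ^ m ∣ V (V (V ψ)) - V (V (V (thetaSum X (X ^ 3) m))) :=
    X_pow_dvd_expand_sub (X_pow_dvd_expand_sub (X_pow_dvd_expand_sub
      (X_pow_dvd_ramanujanPsi_sub m)))
  convert! dvd_sub hφ (dvd_add hVφ (hVψ.mul_left (2 * X))) using 1
  rw [thetaSum_X_X_four_mul_add_one]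
  ring

-- By the dissection, the difference `Δ` of the two sides satisfies `Δ = -V Δ`.
theorem ramanujanPhi_sq : φ ^ 2 = V φ ^ 2 + X * V (4 * V ψ ^ 2) := by
  have hψ := congrArg (fun g => V (V g)) (ramanujanPsi_sq (R := R))
  have hφ := ramanujanPhi_dissection (R := R)
  rw [← sub_eq_zero]
  refine eq_zero_of_eq_neg_expand ?_ ?_
  · simp [constantCoeff_expand]
  · simp only [map_sub, map_add, map_mul, map_pow, map_ofNat, expand_X] at hψ ⊢
    linear_combination (φ + (V (V φ) + 2 * X * V (V (V ψ)))) * hφ - 4 * X * hψ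

theorem overpartitionSeries_pow (k : ℕ) : 𝐏 ^ k = φ ^ k * V 𝐏 ^ (2 * k) := by
  conv_lhs => rw [overpartitionSeries_eq_ramanujanPhi_mul]
  rw [mul_pow, ← pow_mul]

theorem coeff_two_mul_add_one_overpartitionSeries (n : ℕ) :
    coeff (2 * n + 1) 𝐏 = coeff n (2 * V (V ψ) * 𝐏 ^ 2) := by
  refine coeff_odd_of_eq_expand_add (a := V φ * 𝐏 ^ 2) ?_ n
  simp only [map_mul, map_pow, map_ofNat]
  linear_combination overpartitionSeries_eq_ramanujanPhi_mul (R := R) +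
    V 𝐏 ^ 2 * ramanujanPhi_dissection (R := R)

theorem coeff_two_mul_add_one_ramanujanPsi_mul (n : ℕ) :
    coeff (2 * n + 1) (2 * V (V ψ) * 𝐏 ^ 2) = coeff n (8 * V ψ ^ 3 * 𝐏 ^ 4) := by
  refine coeff_odd_of_eq_expand_add (a := 2 * V ψ * φ ^ 2 * 𝐏 ^ 4) ?_ n
  have hφ := ramanujanPhi_sq (R := R)
  simp only [map_mul, map_pow, map_ofNat] at hφ ⊢
  linear_combination 2 * V (V ψ) * (overpartitionSeries_pow (R := R) 2 + V 𝐏 ^ 4 * hφ)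

theorem coeff_two_mul_add_one_ramanujanPsi_cube_mul (n : ℕ) :
    coeff (2 * n + 1) (8 * V ψ ^ 3 * 𝐏 ^ 4) = coeff n (64 * (ψ ^ 7 * 𝐏 ^ 8)) := by
  refine coeff_odd_of_eq_expand_add
    (a := 8 * ψ ^ 3 * (φ ^ 4 + 16 * X * V ψ ^ 4) * 𝐏 ^ 8) ?_ n
  have hψ := congrArg (V) (ramanujanPsi_sq (R := R))
  have hφ := ramanujanPhi_sq (R := R)
  simp only [map_mul, map_add, map_pow, map_ofNat, expand_X] at hψ hφ ⊢
  linear_combination 8 * V ψ ^ 3 * (overpartitionSeries_pow (R := R) 4 +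
    V 𝐏 ^ 8 * (φ ^ 2 + V φ ^ 2 + 4 * X * V (V ψ) ^ 2) * hφ)
    - 64 * X * V ψ ^ 3 * V 𝐏 ^ 8 * (V ψ ^ 2 + V φ * V (V ψ)) * hψ

theorem coeff_eight_mul_add_seven_overpartitionSeries (n : ℕ) :
    coeff (8 * n + 7) 𝐏 = coeff n (64 * (ψ ^ 7 * 𝐏 ^ 8)) := by
  rw [show 8 * n + 7 = 2 * (2 * (2 * n + 1) + 1) + 1 by ring,
    coeff_two_mul_add_one_overpartitionSeries, coeff_two_mul_add_one_ramanujanPsi_mul,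
    coeff_two_mul_add_one_ramanujanPsi_cube_mul]

theorem pentagonalSeries_pow_mul_ramanujanPsi_pow_mul :
    𝐟 ^ 33 * (ψ ^ 7 * 𝐏 ^ 8) = (V 𝐟 ^ 2) ^ 11 * 𝐟 ^ 10 := by
  calc 𝐟 ^ 33 * (ψ ^ 7 * 𝐏 ^ 8) = (V 𝐟 ^ 2) ^ 11 * 𝐟 ^ 10 * (𝐩 * 𝐟) ^ 23 := by
        rw [overpartitionSeries_eq, ramanujanPsi]
        ring
    _ = (V 𝐟 ^ 2) ^ 11 * 𝐟 ^ 10 := by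
        rw [partitionSeries_mul_pentagonalSeries, one_pow, mul_one]

end RamanujanTheta

section JacobiCube

open TrivSqZeroExt DualNumber

variable {B : Type*} [CommRing B]

theorem dvd_snd_of_inl_dvd {q : B} {z : B[ε]} (h : inl q ∣ z) : q ∣ snd z := by
  obtain ⟨c, rfl⟩ := h
  exact ⟨snd c, by simp⟩

theorem neg_inl_mul_one_add_eps_mul (q : B) : -(inl q * (1 + ε)) * -(1 - ε) = (inl q : B[ε]) := by
  linear_combination -inl q * eps_mul_eps (R := B)

theorem inl_pow_dvd_inl_sub_qPochhammer {q F : B} {m : ℕ}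
    (h : q ^ (m + 1) ∣ F - qPochhammer q m) :
    (inl q : B[ε]) ^ (m + 1) ∣ inl F - qPochhammer (inl q) m := by
  have hinl := map_dvd (inlHom B B) h
  rw [map_sub, map_pow] at hinl
  simpa [qPochhammer, map_prod] using hinl

theorem snd_prod_mul_prod (q : B) (m : ℕ) :
    snd ((∏ i ∈ range (m + 1), (1 + -(inl q * (1 + ε)) * inl q ^ i)) *
        ∏ i ∈ range (m + 1), (1 + -(1 - ε : B[ε]) * inl q ^ i)) =
      qPochhammer q (m + 1) * qPochhammer q m := by
  have hfst (z : B[ε]) (k : ℕ → ℕ) (n : ℕ) :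
      fst (∏ i ∈ range n, (1 + z * inl q ^ k i)) = ∏ i ∈ range n, (1 + fst z * q ^ k i) := by
    rw [← fstHom_apply (S := ℤ), map_prod]
    simp
  have hε : ∏ i ∈ range (m + 1), (1 + -(1 - ε : B[ε]) * inl q ^ i) =
      (∏ i ∈ range m, (1 + -(1 - ε : B[ε]) * inl q ^ (i + 1))) * ε := by
    rw [prod_range_succ']
    ring
  rw [hε, ← mul_assoc, DualNumber.snd_mul, snd_eps, fst_eps, mul_zero, add_zero, mul_one, fst_mul,
    hfst _ fun i => i, hfst _ fun i => i + 1]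
  simp [qPochhammer, pow_succ', sub_eq_add_neg]

theorem snd_thetaSum (q : B) (m : ℕ) :
    snd (thetaSum (-(inl q * (1 + ε))) (-(1 - ε : B[ε])) m) =
      ∑ j ∈ range m, (-1) ^ j * (j + 1 : B) *
        (q ^ (j + 1).choose 2 - q ^ (j + 1 + 1).choose 2) := by
  simp only [thetaSum, neg_inl_mul_one_add_eps_mul, snd_add, snd_one, zero_add, snd_sum,
    DualNumber.snd_mul, snd_pow, fst_inl, snd_inl]
  refine sum_congr rfl fun j _ => ?_
  rw [Nat.choose_succ_succ' (j + 1), Nat.choose_one_right]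
  simp
  ring

theorem sum_neg_one_pow_mul_sub (t : ℕ → B) (m : ℕ) :
    ∑ j ∈ range m, (-1) ^ j * (j + 1 : B) * (t j - t (j + 1)) =
      ∑ j ∈ range m, (-1) ^ j * (2 * j + 1 : B) * t j + (-1) ^ m * m * t m := by
  induction m with
  | zero => simp
  | succ m ih =>
    rw [sum_range_succ, sum_range_succ, ih]
    push_cast
    ring

-- Jacobi's triple product has a simple zero at `y = -1`; the `ε`-component is its derivative there.
theorem pow_dvd_cube_sub {q F : B} (hF : IsUnit F) (h : ∀ m, q ^ (m + 1) ∣ F - qPochhammer q m)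
    (m : ℕ) :
    q ^ m ∣ F ^ 3 - ∑ j ∈ range m, (-1) ^ j * (2 * j + 1 : B) * q ^ (j + 1).choose 2 := by
  cases m with
  | zero => simp
  | succ m =>
    have hjtp := jacobi_triple_product (x := -(inl q * (1 + ε))) (y := -(1 - ε : B[ε]))
      (hF.map (inlHom B B)) (by
        rw [neg_inl_mul_one_add_eps_mul]
        exact fun k => inl_pow_dvd_inl_sub_qPochhammer (h k)) (m + 1)
    rw [neg_inl_mul_one_add_eps_mul, inl_pow] at hjtp
    have hsnd := dvd_snd_of_inl_dvd hjtp
    rw [snd_sub, snd_thetaSum, sum_neg_one_pow_mul_sub, DualNumber.snd_mul, snd_prod_mul_prod,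
      inlHom_apply, fst_inl, snd_inl, zero_mul, add_zero] at hsnd
    have hcube := (dvd_mul_sub_mul ((pow_dvd_pow q (by omega)).trans (h (m + 1))) (h m)).mul_left F
    have hlast : q ^ (m + 1) ∣ (-1) ^ (m + 1) * ((m + 1 : ℕ) : B) * q ^ (m + 1 + 1).choose 2 :=
      (pow_dvd_pow q (by rw [Nat.choose_succ_succ', Nat.choose_one_right]; omega)).mul_left _
    convert! dvd_add (dvd_add hcube hsnd) hlast using 1
    ring

end JacobiCube

section CoefficientSupport

variable {R : Type*} [CommRing R]

local notation "𝐟" => pentagonalSeries R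

theorem coeff_pentagonalSeries_eq_zero_of_forall {n : ℕ} (h : ∀ r : R, r ^ 2 ≠ 24 * n + 1) :
    coeff n 𝐟 = 0 := by
  refine coeff_pentagonalSeries_eq_zero R ?_
  rintro ⟨k, rfl⟩
  have hk := congrArg (Int.cast : ℤ → R) (two_mul_natCast_pentagonal k)
  push_cast at hk
  exact h (6 * k - 1) (by linear_combination -12 * hk)

theorem coeff_pentagonalSeries_cube_eq_zero_of_forall {n : ℕ}
    (h : ∀ r : R, r ^ 2 = 8 * n + 1 → r = 0) : coeff n (𝐟 ^ 3) = 0 := by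
  have hdvd := pow_dvd_cube_sub isUnit_pentagonalSeries
    (X_pow_dvd_pentagonalSeries_sub (R := R)) (n + 1)
  have hcoeff := X_pow_dvd_iff.1 hdvd n (lt_add_one n)
  rw [map_sub, sub_eq_zero] at hcoeff
  rw [hcoeff, map_sum]
  refine sum_eq_zero fun j _ => ?_
  rw [show (-1) ^ j * (2 * j + 1 : R⟦X⟧) = C ((-1) ^ j * (2 * j + 1 : R)) by
    simp only [map_mul, map_pow, map_neg, map_one, map_add, map_ofNat, map_natCast],
    coeff_C_mul, coeff_X_pow]
  split_ifs with hj
  · have hn := congrArg (Nat.cast : ℕ → R) (two_mul_add_one_choose_two j)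
    rw [← hj] at hn
    push_cast at hn
    rw [h (2 * j + 1) (by linear_combination -4 * hn), mul_zero, zero_mul]
  · rw [mul_zero]

end CoefficientSupport

section ResiduePart

variable {R : Type*} [CommRing R] {m : ℕ}

variable (m) in
/-- The part of a power series supported on the exponents congruent to `c` modulo `m`. -/
noncomputable def residuePart (c : ZMod m) (g : R⟦X⟧) : R⟦X⟧ :=
  mk fun n => if (n : ZMod m) = c then coeff n g else 0

theorem coeff_residuePart (c : ZMod m) (g : R⟦X⟧) (n : ℕ) :
    coeff n (residuePart m c g) = if (n : ZMod m) = c then coeff n g else 0 :=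
  coeff_mk _ _

theorem residuePart_eq_zero_iff {c : ZMod m} {g : R⟦X⟧} :
    residuePart m c g = 0 ↔ ∀ n : ℕ, (n : ZMod m) = c → coeff n g = 0 := by
  simp [PowerSeries.ext_iff, coeff_residuePart]

theorem residuePart_mul_of_support [NeZero m] {s : Finset (ZMod m)} {u : R⟦X⟧}
    (hs : ∀ a ∉ s, residuePart m a u = 0) (c : ZMod m) (v : R⟦X⟧) :
    residuePart m c (u * v) = ∑ a ∈ s, residuePart m a u * residuePart m (c - a) v := by
  rw [sum_subset s.subset_univ fun a _ ha => by rw [hs a ha, zero_mul]]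
  ext n
  simp only [map_sum, coeff_mul, coeff_residuePart, ite_mul, mul_ite, zero_mul, mul_zero]
  rw [sum_comm, ← sum_const_zero, ← sum_ite_irrel]
  refine sum_congr rfl fun p hp => ?_
  rw [sum_eq_single_of_mem (p.1 : ZMod m) (mem_univ _) fun a _ ha => by simp [ha.symm]]
  simp [← mem_antidiagonal.1 hp, eq_sub_iff_add_eq, add_comm]

theorem residuePart_pow_prime_mul {p : ℕ} [Fact p.Prime] (c : ZMod p) (g u : (ZMod p)⟦X⟧) :
    residuePart p c (g ^ p * u) = g ^ p * residuePart p c u := by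
  have hfrob : (g.expand p (NeZero.ne p)).map (frobenius (ZMod p) p) = g ^ p :=
    MvPowerSeries.map_frobenius_expand p (NeZero.ne p)
  have hcoeff (n : ℕ) (hn : (n : ZMod p) ≠ 0) : coeff n (g ^ p) = 0 := by
    rw [← hfrob, coeff_map, coeff_expand_of_not_dvd _ _ _ (mt (ZMod.natCast_eq_zero_iff n p).2 hn),
      map_zero]
  have hzero : residuePart p 0 (g ^ p) = g ^ p := by
    ext n
    rw [coeff_residuePart]
    split_ifs with hn
    exacts [rfl, (hcoeff n hn).symm]
  rw [residuePart_mul_of_support (s := {0}), sum_singleton, hzero, sub_zero]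
  intro a ha
  refine residuePart_eq_zero_iff.2 fun n hn => hcoeff n ?_
  rw [hn]
  exact mt mem_singleton.2 ha

theorem residuePart_pentagonalSeries_eq_zero {c : ZMod m}
    (h : ∀ r : ZMod m, r ^ 2 ≠ 24 * c + 1) : residuePart m c (pentagonalSeries (ZMod m)) = 0 :=
  residuePart_eq_zero_iff.2 fun _ hn => coeff_pentagonalSeries_eq_zero_of_forall (hn ▸ h)

theorem residuePart_pentagonalSeries_cube_eq_zero {c : ZMod m}
    (h : ∀ r : ZMod m, r ^ 2 = 8 * c + 1 → r = 0) :
    residuePart m c (pentagonalSeries (ZMod m) ^ 3) = 0 :=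
  residuePart_eq_zero_iff.2 fun _ hn => coeff_pentagonalSeries_cube_eq_zero_of_forall (hn ▸ h)

end ResiduePart

section CyclicRelations

variable {B : Type*} [CommRing B]

/-- The degree `0` component of `(z + ∑ i, y i) ^ 3`, in the `ZMod 11`-grading where `z` has degree
`0` and `y i` has degree `6 * 4 ^ i`. The indices are cyclic because `4` is a unit of order `5` in
`ZMod 11`. -/
def invariantCubic (z : B) (y : Fin 5 → B) : B := z ^ 3 + 3 * ∑ i, y i * y (i + 2) ^ 2

/-- The component of degree `4 ^ i` of `(z + ∑ i, y i) ^ 3`, in the grading of `invariantCubic`. -/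
def residueCubic (z : B) (y : Fin 5 → B) (i : Fin 5) : B :=
  3 * z * y i ^ 2 + 6 * z * y (i + 1) * y (i + 3) + 3 * y (i + 1) ^ 2 * y (i + 2) +
    3 * y (i + 2) ^ 2 * y (i + 4) + 6 * y i * y (i + 3) * y (i + 4)

/-- The component of degree `6 * 4 ^ i` of `(z + ∑ i, y i) ^ 3`, in the grading of
`invariantCubic`. -/
def nonresidueCubic (z : B) (y : Fin 5 → B) (i : Fin 5) : B :=
  3 * z ^ 2 * y i + 6 * z * y (i + 3) * y (i + 4) + y (i + 1) ^ 3 +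
    3 * y (i + 2) * y (i + 3) ^ 2 + 6 * y (i + 1) * y (i + 2) * y (i + 4)

/-- One third of the degree `0` component of `(∑ i, w i) ^ 3 * (z + ∑ i, y i)`, where `w i` has the
same degree as `y i` in the grading of `invariantCubic`. -/
def invariantQuartic (z : B) (y w : Fin 5 → B) : B :=
  ∑ i, w i * (w i * (w (i + 1) * y (i + 2) + w (i + 2) * y (i + 1) + w (i + 3) * z) +
    2 * w (i + 1) * w (i + 2) * y i)

-- The coefficients in the next two proofs were found by solving linear systems over `ZMod 11`.
theorem nonresidueCubic_mul_eq [CharP B 11] {z : B} {y : Fin 5 → B}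
    (h0 : invariantCubic z y = 0) (h : ∀ i, residueCubic z y i = 0) (i : Fin 5) :
    nonresidueCubic z y i * z = 2 * nonresidueCubic z y (i + 4) * y (i + 3) := by
  linear_combination (norm := skip)
    3 * y i * h0 + 4 * y (i + 1) * h (i + 1) - 3 * y (i + 2) * h (i + 3)
  fin_cases i <;>
    simp only [invariantCubic, residueCubic, nonresidueCubic, Fin.sum_univ_five, Fin.reduceAdd,
      Fin.reduceFinMk] <;>
    ring_nf <;> reduce_mod_char!

theorem nonresidueCubic_mul_add_eq_zero [CharP B 11] {z : B} {y : Fin 5 → B}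
    (h : ∀ i, residueCubic z y i = 0) (i : Fin 5) :
    2 * nonresidueCubic z y i * y i + nonresidueCubic z y (i + 1) * y (i + 3) +
      3 * nonresidueCubic z y (i + 3) * y (i + 1) = 0 := by
  linear_combination (norm := skip)
    2 * z * h i + 4 * y (i + 2) * h (i + 1) + y (i + 4) * h (i + 2)
  fin_cases i <;>
    simp only [residueCubic, nonresidueCubic, Fin.reduceAdd, Fin.reduceFinMk] <;>
    ring_nf <;> reduce_mod_char!

theorem two_mul_invariantQuartic_eq_zero {z : B} {y w : Fin 5 → B}
    (hz : ∀ i, w i * z = 2 * w (i + 4) * y (i + 3))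
    (hy : ∀ i, 2 * w i * y i + w (i + 1) * y (i + 3) + 3 * w (i + 3) * y (i + 1) = 0) :
    2 * invariantQuartic z y w = 0 := by
  have hsquare : ∑ i, w i ^ 2 * (w (i + 3) * z - 2 * w (i + 3 + 4) * y (i + 3 + 3)) = 0 :=
    sum_eq_zero fun i _ => by rw [hz, sub_self, mul_zero]
  have hproduct : ∑ i, w i * w (i + 3) * (w i * z - 2 * w (i + 4) * y (i + 3)) = 0 :=
    sum_eq_zero fun i _ => by rw [hz, sub_self, mul_zero]
  have hlinear : ∑ i, w (i + 1) * w (i + 2) *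
      (2 * w i * y i + w (i + 1) * y (i + 3) + 3 * w (i + 3) * y (i + 1)) = 0 :=
    sum_eq_zero fun i _ => by rw [hy, mul_zero]
  simp only [invariantQuartic, Fin.sum_univ_five, Fin.reduceAdd] at hsquare hproduct hlinear ⊢
  linear_combination 2 * hlinear - hsquare + 3 * hproduct

end CyclicRelations

section ModEleven

local notation "𝐟" => pentagonalSeries (ZMod 11)
local notation "𝐟₀" => residuePart 11 5 (pentagonalSeries (ZMod 11))

/-- The nonzero residue parts of `∏ (1 - q ^ n)` other than `𝐟₀`. A generalized pentagonal number
`n` makes `24 * n + 1 = 2 * (n - 5)` a square modulo 11, so that `n` is congruent to `5` or to some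
`5 + 6 * 4 ^ i`. -/
noncomputable def eulerComponent (i : Fin 5) : (ZMod 11)⟦X⟧ :=
  residuePart 11 (5 + 6 * 4 ^ (i : ℕ)) 𝐟

/-- The nonzero residue parts of `∏ (1 - q ^ n) ^ 3`. A triangular number `n = j * (j + 1) / 2`
makes `8 * n + 1 = 8 * (n - 4)` equal to the square of `2 * j + 1`, so that `n` is congruent to some
`4 + 6 * 4 ^ i` or to `4`; in the latter case Jacobi's coefficient `±(2 * j + 1)` vanishes. -/
noncomputable def cubeComponent (i : Fin 5) : (ZMod 11)⟦X⟧ :=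
  residuePart 11 (4 + 6 * 4 ^ (i : ℕ)) (𝐟 ^ 3)

theorem residuePart_pentagonalSeries_mul (c : ZMod 11) (v : (ZMod 11)⟦X⟧) :
    residuePart 11 c (𝐟 * v) = 𝐟₀ * residuePart 11 (c - 5) v +
      ∑ i, eulerComponent i * residuePart 11 (c - (5 + 6 * 4 ^ (i : ℕ))) v := by
  rw [residuePart_mul_of_support (s := insert 5 (univ.image fun i : Fin 5 => 5 + 6 * 4 ^ (i : ℕ)))
    fun _ ha => residuePart_pentagonalSeries_eq_zero (by decide +revert),
    sum_insert (by decide), sum_image (Function.Injective.injOn (by decide))]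
  rfl

theorem residuePart_pentagonalSeries_cube_mul (c : ZMod 11) (v : (ZMod 11)⟦X⟧) :
    residuePart 11 c (𝐟 ^ 3 * v) =
      ∑ i, cubeComponent i * residuePart 11 (c - (4 + 6 * 4 ^ (i : ℕ))) v := by
  rw [residuePart_mul_of_support (s := univ.image fun i : Fin 5 => 4 + 6 * 4 ^ (i : ℕ))
    fun _ ha => residuePart_pentagonalSeries_cube_eq_zero (by decide +revert),
    sum_image (Function.Injective.injOn (by decide))]
  rfl

theorem residuePart_four_pentagonalSeries_cube :
    residuePart 11 4 (𝐟 ^ 3) = invariantCubic 𝐟₀ eulerComponent := by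
  rw [pow_three]
  simp only [residuePart_pentagonalSeries_mul, Fin.sum_univ_five, invariantCubic, eulerComponent,
    Fin.coe_ofNat_eq_mod, Fin.reduceAdd]
  reduce_mod_char
  simp (disch := decide) only [residuePart_pentagonalSeries_eq_zero, mul_zero, add_zero, zero_add]
  ring

theorem residuePart_four_add_pentagonalSeries_cube (i : Fin 5) :
    residuePart 11 (4 + 4 ^ (i : ℕ)) (𝐟 ^ 3) = residueCubic 𝐟₀ eulerComponent i := by
  rw [pow_three]
  simp only [residuePart_pentagonalSeries_mul, Fin.sum_univ_five, residueCubic, eulerComponent]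
  fin_cases i
  all_goals
    simp only [Fin.coe_ofNat_eq_mod, Fin.reduceAdd, Fin.reduceFinMk]
    reduce_mod_char
    simp (disch := decide) only [residuePart_pentagonalSeries_eq_zero, mul_zero, add_zero, zero_add]
    ring

theorem cubeComponent_eq_nonresidueCubic (i : Fin 5) :
    cubeComponent i = nonresidueCubic 𝐟₀ eulerComponent i := by
  rw [cubeComponent, pow_three]
  simp only [residuePart_pentagonalSeries_mul, Fin.sum_univ_five, nonresidueCubic, eulerComponent]
  fin_cases i
  all_goals
    simp only [Fin.coe_ofNat_eq_mod, Fin.reduceAdd, Fin.reduceFinMk]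
    reduce_mod_char
    simp (disch := decide) only [residuePart_pentagonalSeries_eq_zero, mul_zero, add_zero, zero_add]
    ring

theorem residuePart_six_pentagonalSeries_pow_ten :
    residuePart 11 6 (𝐟 ^ 10) = 3 * invariantQuartic 𝐟₀ eulerComponent cubeComponent := by
  rw [show 𝐟 ^ 10 = 𝐟 ^ 3 * (𝐟 ^ 3 * (𝐟 ^ 3 * 𝐟)) by ring]
  simp only [residuePart_pentagonalSeries_cube_mul, Fin.sum_univ_five, invariantQuartic,
    eulerComponent, Fin.coe_ofNat_eq_mod, Fin.reduceAdd]
  reduce_mod_char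
  simp (disch := decide) only [residuePart_pentagonalSeries_eq_zero, mul_zero, add_zero, zero_add]
  ring

theorem residuePart_six_pentagonalSeries_pow_ten_eq_zero : residuePart 11 6 (𝐟 ^ 10) = 0 := by
  have : CharP (ZMod 11)⟦X⟧ 11 := charP_of_injective_ringHom (C_injective (R := ZMod 11)) 11
  have h0 : invariantCubic 𝐟₀ eulerComponent = 0 := by
    rw [← residuePart_four_pentagonalSeries_cube]
    exact residuePart_pentagonalSeries_cube_eq_zero (by decide)
  have h (i : Fin 5) : residueCubic 𝐟₀ eulerComponent i = 0 := by
    rw [← residuePart_four_add_pentagonalSeries_cube]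
    exact residuePart_pentagonalSeries_cube_eq_zero (by decide +revert)
  have hquartic := two_mul_invariantQuartic_eq_zero (nonresidueCubic_mul_eq h0 h)
    (nonresidueCubic_mul_add_eq_zero h)
  rw [residuePart_six_pentagonalSeries_pow_ten, funext cubeComponent_eq_nonresidueCubic,
    show (3 : (ZMod 11)⟦X⟧) = 7 * 2 by reduce_mod_char!, mul_assoc, hquartic, mul_zero]

theorem residuePart_six_ramanujanPsi_pow_mul_overpartitionSeries_pow :
    residuePart 11 6 (ramanujanPsi (ZMod 11) ^ 7 * overpartitionSeries (ZMod 11) ^ 8) = 0 := by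
  have : Fact (Nat.Prime 11) := ⟨by norm_num⟩
  have h := congrArg (residuePart 11 6)
    (pentagonalSeries_pow_mul_ramanujanPsi_pow_mul (R := ZMod 11))
  rw [pow_mul 𝐟 3 11, residuePart_pow_prime_mul, residuePart_pow_prime_mul,
    residuePart_six_pentagonalSeries_pow_ten_eq_zero, mul_zero] at h
  exact (((isUnit_pentagonalSeries.pow 3).pow 11).mul_right_eq_zero).1 h

end ModEleven

end OverpartitionCongruence

open OverpartitionCongruence

theorem overpartition_eleven_congruence (n : ℕ) : 11 ∣ overpartition (11 * (8 * n + 5)) := by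
  have hindex : 11 * (8 * n + 5) = 8 * (11 * n + 6) + 7 := by ring
  have hclass : ((11 * n + 6 : ℕ) : ZMod 11) = 6 := by
    push_cast
    reduce_mod_char
  have hpart := residuePart_eq_zero_iff.1
    residuePart_six_ramanujanPsi_pow_mul_overpartitionSeries_pow (11 * n + 6) hclass
  rw [← ZMod.natCast_eq_zero_iff, ← coeff_overpartitionSeries, hindex,
    coeff_eight_mul_add_seven_overpartitionSeries, ← map_ofNat C 64, coeff_C_mul, hpart, mul_zero]
end

section
/- For every integer n ≥ 0, the number of overpartitions of 13·2^6·(8n+7) is divisible by 13, i.e. p̄(832(8n+7)) ≡ 0 (mod 13). -/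
/-!
By Gauss's identity the generating function of overpartitions is `1 / θ₄`. Modulo `13` the Hasse
form `H` of the Legendre family satisfies `H (θ₃ ^ 4, θ₂ ^ 4) = 1`, since Landen's transformation
makes the left side invariant under `q ↦ q ^ 2`. With `λ = θ₂ ^ 4 / θ₃ ^ 4` this writes `θ₄ ^ 12`
as a thirteenth power times `P (λ) * θ₄ ^ 4` for a polynomial `P`. As `q dλ/dq = λ * θ₄ ^ 4`, the
operator `U₁₃` acts on the last factor as the Cartier operator acts on `P (λ) dλ / λ`, by keeping
only the exponents of `P` divisible by `13`. The result is
`U₁₃ (1 / θ₄) = θ₄ ^ 3 * (θ₃ ^ 8 + θ₃ ^ 4 * θ₂ ^ 4 + θ₂ ^ 8)`.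

The splitting `θ₃ = θ₃ (q ^ 4) + θ₂ (q ^ 4)` according to exponents modulo `4` makes `U₄` act
linearly on the forms `α * θ₃ ^ 8 + β * θ₃ ^ 4 * θ₂ ^ 4 + γ * θ₂ ^ 8` multiplied by `θ₃ ^ 3`.
Modulo `13` and after `q ↦ -q`, three steps lead to `(α, β, γ) = (1, 4, 1)`, for which the part of
the series with exponents `3` modulo `4` is `θ₂ (q ^ 4) ^ 3` times a series in `q ^ 8`. All its
exponents are therefore `3` modulo `8`.
-/

open Finset

section HasseForm

open Polynomial

variable {R : Type*} [CommRing R]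

/-- The form `∑ (m choose k) ^ 2 * x ^ (m - k) * y ^ k`. For `m = (p - 1) / 2` it is, up to sign,
the Hasse invariant of the Legendre curve with parameter `y / x` in characteristic `p`. -/
def hasseForm (m : ℕ) (x y : R) : R :=
  ∑ k ∈ range (m + 1), (m.choose k : R) ^ 2 * x ^ (m - k) * y ^ k

lemma map_hasseForm {S F : Type*} [CommRing S] [FunLike F R S] [RingHomClass F R S] (φ : F)
    (m : ℕ) (x y : R) : φ (hasseForm m x y) = hasseForm m (φ x) (φ y) := by
  simp [hasseForm]

lemma hasseForm_mul_mul (m : ℕ) (c x y : R) :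
    hasseForm m (c * x) (c * y) = c ^ m * hasseForm m x y := by
  rw [hasseForm, hasseForm, mul_sum]
  refine sum_congr rfl fun k hk ↦ ?_
  rw [← Nat.sub_add_cancel (mem_range_succ_iff.1 hk), Nat.add_sub_cancel, pow_add]
  ring

-- Landen's transformation: the two forms belong to `2`-isogenous elliptic curves.
lemma hasseForm_add_sq_sub_sq [CharP R 13] (x y : R) :
    hasseForm 6 ((x + y) ^ 2) ((x - y) ^ 2) = hasseForm 6 (x ^ 2) (x ^ 2 - y ^ 2) := by
  simp only [hasseForm, sum_range_succ, range_zero, sum_empty, Nat.choose]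
  grind

lemma coeff_hasseForm_one_X (m n : ℕ) :
    (hasseForm m 1 X : R[X]).coeff n = (m.choose n : R) ^ 2 := by
  simp only [hasseForm, one_pow, mul_one, finsetSum_coeff, ← C_eq_natCast, ← map_pow,
    coeff_C_mul_X_pow, sum_ite_eq, mem_range, ite_eq_left_iff]
  intro hn
  rw [Nat.choose_eq_zero_of_lt (by lia), Nat.cast_zero, zero_pow two_ne_zero]

lemma natDegree_hasseForm_one_X_le (m : ℕ) : (hasseForm m 1 X : R[X]).natDegree ≤ m := by
  refine natDegree_le_iff_coeff_eq_zero.2 fun n hn ↦ ?_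
  rw [coeff_hasseForm_one_X, Nat.choose_eq_zero_of_lt hn, Nat.cast_zero, zero_pow two_ne_zero]

lemma coeff_one_sub_X_mul_hasseForm_one_X (m n : ℕ) :
    ((1 - X) * hasseForm m 1 X : R[X]).coeff n =
      if n = 0 then 1 else (m.choose n : R) ^ 2 - (m.choose (n - 1) : R) ^ 2 := by
  rw [sub_mul, one_mul, coeff_sub, coeff_hasseForm_one_X]
  cases n with
  | zero => simp
  | succ n => simp [coeff_X_mul, coeff_hasseForm_one_X]

lemma contract_one_sub_X_sq_mul_hasseForm_pow_four :
    contract 13 ((1 - X) ^ 2 * hasseForm 6 1 X ^ 4 : (ZMod 13)[X]) = 1 + X + X ^ 2 := by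
  set G : (ZMod 13)[X] := hasseForm 6 1 X * ((1 - X) * hasseForm 6 1 X) with hG
  have hsq : ((1 - X) ^ 2 * hasseForm 6 1 X ^ 4 : (ZMod 13)[X]) = G * G := by
    rw [hG]
    ring
  have hcoeff (n : ℕ) : G.coeff n = ∑ ij ∈ antidiagonal n, (Nat.choose 6 ij.1 : ZMod 13) ^ 2 *
      if ij.2 = 0 then 1 else (Nat.choose 6 ij.2 : ZMod 13) ^ 2 - Nat.choose 6 (ij.2 - 1) ^ 2 := by
    simp only [hG, coeff_mul (hasseForm 6 1 X), coeff_hasseForm_one_X,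
      coeff_one_sub_X_mul_hasseForm_one_X]
  ext n
  rw [coeff_contract (by norm_num), hsq]
  rcases lt_or_ge n 3 with hn | hn
  · simp only [coeff_mul, hcoeff, coeff_add, coeff_X_pow, coeff_X, coeff_one]
    revert n
    decide +kernel
  · have hH := natDegree_hasseForm_one_X_le (R := ZMod 13) 6
    have hX : natDegree (1 - X : (ZMod 13)[X]) ≤ 1 := by compute_degree
    have hdeg : G.natDegree ≤ 13 := natDegree_mul_le_of_le hH (natDegree_mul_le_of_le hX hH)
    have hdeg' : (1 + X + X ^ 2 : (ZMod 13)[X]).natDegree ≤ 2 := by compute_degree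
    rw [coeff_eq_zero_of_natDegree_lt ((natDegree_mul_le_of_le hdeg hdeg).trans_lt (by lia)),
      coeff_eq_zero_of_natDegree_lt (hdeg'.trans_lt hn)]

end HasseForm

open PowerSeries

section Operators

/-- Atkin's operator `U_m`, which sends `∑ aₙ qⁿ` to `∑ a_{mn} qⁿ`. -/
noncomputable def atkinU {R : Type*} [CommSemiring R] (m : ℕ) : R⟦X⟧ →ₗ[R] R⟦X⟧ where
  toFun f := PowerSeries.mk fun n ↦ coeff (m * n) f
  map_add' f g := by ext n; simp
  map_smul' c f := by ext n; simp

/-- The Euler operator `q d/dq`, which sends `∑ aₙ qⁿ` to `∑ n aₙ qⁿ`. -/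
noncomputable def eulerDerivation (R : Type*) [CommSemiring R] : Derivation R R⟦X⟧ R⟦X⟧ :=
  (X : R⟦X⟧) • derivative R

/-- The coefficients of `f` vanish outside the residue class `r` modulo `m`. -/
def SupportedOn {R : Type*} [Semiring R] {m : ℕ} (r : ZMod m) (f : R⟦X⟧) : Prop :=
  ∀ n : ℕ, (n : ZMod m) ≠ r → coeff n f = 0

variable {R : Type*} [CommRing R] {f g : R⟦X⟧} {m : ℕ}

@[simp]
lemma coeff_atkinU (m n : ℕ) (f : R⟦X⟧) : coeff n (atkinU m f) = coeff (m * n) f := by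
  simp [atkinU]

lemma atkinU_expand_mul (hm : m ≠ 0) (g f : R⟦X⟧) :
    atkinU m (expand m hm g * f) = g * atkinU m f := by
  ext n
  rw [coeff_atkinU, coeff_mul, coeff_mul]
  symm
  refine sum_of_injOn (fun p ↦ (m * p.1, m * p.2)) ?_ ?_ ?_ ?_
  · rintro ⟨i, j⟩ _ ⟨k, l⟩ _ h
    simpa [hm] using h
  · rintro ⟨i, j⟩ h
    simp_all [← mul_add]
  · rintro ⟨i, j⟩ hij hnot
    rw [HasAntidiagonal.mem_antidiagonal] at hij
    by_cases hi : m ∣ i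
    · obtain ⟨k, rfl⟩ := hi
      obtain ⟨l, rfl⟩ := (Nat.dvd_add_right ⟨k, rfl⟩).1 ⟨n, hij⟩
      refine absurd ⟨(k, l), ?_, rfl⟩ hnot
      simpa [← mul_add, hm] using hij
    · rw [coeff_expand_of_not_dvd m hm g hi, zero_mul]
  · simp

@[simp]
lemma atkinU_expand (hm : m ≠ 0) (g : R⟦X⟧) : atkinU m (expand m hm g) = g := by
  ext n
  simp

lemma atkinU_rescale_neg_one (hm : Even m) (f : R⟦X⟧) :
    atkinU m (rescale (-1) f) = atkinU m f := by
  ext n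
  simp [coeff_rescale, (hm.mul_right n).neg_one_pow]

@[simp]
lemma coeff_eulerDerivation (n : ℕ) (f : R⟦X⟧) :
    coeff n (eulerDerivation R f) = n * coeff n f := by
  change coeff n (X * derivative R f) = _
  cases n with
  | zero => simp
  | succ n => simp [coeff_succ_X_mul, coeff_derivative, mul_comm]

lemma eulerDerivation_mul (f g : R⟦X⟧) :
    eulerDerivation R (f * g) = f * eulerDerivation R g + g * eulerDerivation R f := by
  simp [Derivation.leibniz]

lemma eulerDerivation_pow (f : R⟦X⟧) (n : ℕ) :
    eulerDerivation R (f ^ n) = n * f ^ (n - 1) * eulerDerivation R f := by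
  simp [Derivation.leibniz_pow, mul_assoc]

lemma constantCoeff_eulerDerivation (f : R⟦X⟧) : constantCoeff (eulerDerivation R f) = 0 := by
  rw [← coeff_zero_eq_constantCoeff_apply, coeff_eulerDerivation, Nat.cast_zero, zero_mul]

lemma eulerDerivation_expand (hm : m ≠ 0) (f : R⟦X⟧) :
    eulerDerivation R (expand m hm f) = m * expand m hm (eulerDerivation R f) := by
  ext n
  rw [← map_natCast (C (R := R)) m, coeff_C_mul, coeff_eulerDerivation]
  by_cases hn : m ∣ n
  · obtain ⟨k, rfl⟩ := hn
    simp [mul_assoc]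
  · simp [coeff_expand_of_not_dvd m hm _ hn]

lemma eulerDerivation_map {S : Type*} [CommRing S] (φ : R →+* S) (f : R⟦X⟧) :
    eulerDerivation S (map φ f) = map φ (eulerDerivation R f) := by
  ext n
  simp

instance [NeZero (2 : R)] : NeZero (2 : R⟦X⟧) where
  out h := two_ne_zero (C_injective (R := R) (by rw [map_ofNat, h, map_zero]))

lemma eq_C_of_expand_eq_self (hm : 1 < m) (h : expand m (by lia) f = f) :
    f = C (constantCoeff f) := by
  ext n
  induction n using Nat.strong_induction_on with
  | _ n ih =>
    rcases Nat.eq_zero_or_pos n with rfl | hn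
    · simp
    · rw [coeff_C, if_neg hn.ne', ← h, coeff_expand]
      split_ifs with hd
      · have hpos := Nat.div_pos (Nat.le_of_dvd hn hd) (by lia)
        rw [ih _ (Nat.div_lt_self hn hm), coeff_C, if_neg hpos.ne']
      · rfl

lemma eq_zero_of_mul_expand_eq_mul [IsDomain R] (hm : m ≠ 0) {u v : R⟦X⟧}
    (h : u * expand m hm f = v * f) (hu : constantCoeff u ≠ 0)
    (hv : v.order < ↑(m - 1) * f.order) : f = 0 := by
  by_contra hf
  have horder := congrArg PowerSeries.order h
  have hu0 : u.order = 0 := by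
    simpa using mt order_ne_zero_iff_constCoeff_eq_zero.mp hu
  lift f.order to ℕ using order_eq_top.not.mpr hf with d hd
  rw [order_mul, order_mul, order_expand, hu0, ← hd] at horder
  lift v.order to ℕ using hv.ne_top with e he
  norm_cast at horder hv
  rw [nsmul_eq_mul] at horder
  norm_cast at horder
  rw [← Nat.sub_one_add_one hm, zero_add, add_one_mul] at horder
  exact hv.ne' (Nat.add_right_cancel horder)

namespace SupportedOn

variable {r s : ZMod m}

lemma mul (hf : SupportedOn r f) (hg : SupportedOn s g) : SupportedOn (r + s) (f * g) := by
  intro n hn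
  rw [coeff_mul]
  refine sum_eq_zero fun ⟨i, j⟩ hij ↦ ?_
  rw [HasAntidiagonal.mem_antidiagonal] at hij
  by_cases hi : (i : ZMod m) = r
  · have hj : (j : ZMod m) ≠ s := by
      rintro rfl
      exact hn (by simp [← hij, hi])
    rw [hg j hj, mul_zero]
  · rw [hf i hi, zero_mul]

lemma pow (hf : SupportedOn r f) (k : ℕ) : SupportedOn ((k : ZMod m) * r) (f ^ k) := by
  induction k with
  | zero =>
    intro n hn
    rw [pow_zero, coeff_one, if_neg]
    rintro rfl
    simp at hn
  | succ k ih =>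
    rw [pow_succ, Nat.cast_succ, add_one_mul]
    exact ih.mul hf

lemma castHom {k : ℕ} (h : k ∣ m) (hf : SupportedOn r f) :
    SupportedOn (ZMod.castHom h (ZMod k) r) f :=
  fun n hn ↦ hf n fun hr ↦ hn (by simp [← hr])

lemma rescale_neg_one (hf : SupportedOn (0 : ZMod 2) f) : rescale (-1) f = f := by
  ext n
  by_cases hn : (n : ZMod 2) = 0
  · rw [coeff_rescale, (ZMod.natCast_eq_zero_iff_even.1 hn).neg_one_pow, one_mul]
  · rw [coeff_rescale, hf n hn, mul_zero]

lemma rescale_neg_one_eq_neg (hf : SupportedOn (1 : ZMod 2) f) :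
    rescale (-1) f = -f := by
  ext n
  by_cases hn : (n : ZMod 2) = 1
  · rw [coeff_rescale, (ZMod.natCast_eq_one_iff_odd.1 hn).neg_one_pow, neg_one_mul, map_neg]
  · rw [coeff_rescale, map_neg, hf n hn, mul_zero, neg_zero]

lemma atkinU_eq_zero (hf : SupportedOn r f) (hr : r ≠ 0) : atkinU m f = 0 := by
  ext n
  rw [coeff_atkinU, hf _ (by simpa using hr.symm), map_zero]

end SupportedOn

lemma supportedOn_expand (hm : m ≠ 0) (f : R⟦X⟧) : SupportedOn (0 : ZMod m) (expand m hm f) :=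
  fun n hn ↦ coeff_expand_of_not_dvd m hm f (by rwa [← ZMod.natCast_eq_zero_iff])

lemma expand_two_rescale_neg_one {f g h : R⟦X⟧} (hf : expand 2 two_ne_zero f = g + h)
    (hg : SupportedOn (0 : ZMod 4) g) (hh : SupportedOn (2 : ZMod 4) h) :
    expand 2 two_ne_zero (rescale (-1) f) = g - h := by
  ext n
  have hn := congrArg (coeff n) hf
  rw [map_add, coeff_expand] at hn
  rw [map_sub, coeff_expand]
  split_ifs at hn ⊢ with hdvd
  · obtain ⟨k, rfl⟩ := hdvd
    rw [Nat.mul_div_cancel_left k two_pos] at hn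
    rw [Nat.mul_div_cancel_left k two_pos, coeff_rescale, hn]
    rcases Nat.even_or_odd k with ⟨l, rfl⟩ | ⟨l, rfl⟩
    · rw [hh _ (mt (ZMod.natCast_eq_natCast_iff' _ 2 4).1 (by lia)),
        (Even.add_self l).neg_one_pow]
      ring
    · rw [hg _ (mt (ZMod.natCast_eq_natCast_iff' _ 0 4).1 (by lia)),
        (odd_two_mul_add_one l).neg_one_pow]
      ring
  · rw [hg _ (mt (ZMod.natCast_eq_natCast_iff' _ 0 4).1 (by lia)),
      hh _ (mt (ZMod.natCast_eq_natCast_iff' _ 2 4).1 (by lia)), sub_zero]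

lemma supportedOn_expand_of_rescale_neg_one [NoZeroDivisors R] [NeZero (2 : R)] (hm : m ≠ 0)
    (hf : rescale (-1) f = f) : SupportedOn (0 : ZMod (2 * m)) (expand m hm f) := by
  intro n hn
  rw [coeff_expand]
  split_ifs with hd
  · obtain ⟨k, rfl⟩ := hd
    have hk : Odd k := by
      rw [← Nat.not_even_iff_odd, even_iff_two_dvd]
      rintro ⟨l, rfl⟩
      exact hn ((ZMod.natCast_eq_zero_iff _ _).2 ⟨l, by ring⟩)
    have hcoeff := congrArg (coeff k) hf
    rw [coeff_rescale, hk.neg_one_pow] at hcoeff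
    have h2 : 2 * coeff k f = 0 := by linear_combination -hcoeff
    rw [Nat.mul_div_cancel_left k (Nat.pos_of_ne_zero hm)]
    exact (mul_eq_zero.mp h2).resolve_left two_ne_zero
  · rfl

end Operators

section ThetaSeries

/-- The integers with square `n`. -/
noncomputable def intSqrts (n : ℕ) : Finset ℤ := {x ∈ Icc (-n : ℤ) n | x ^ 2 = n}

/-- The representations of `n` as an ordered sum of two squares of integers. -/
noncomputable def sumTwoSqReps (n : ℕ) : Finset (ℤ × ℤ) :=
  {z ∈ Icc (-n : ℤ) n ×ˢ Icc (-n : ℤ) n | z.1 ^ 2 + z.2 ^ 2 = n}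

/-- Jacobi's theta series `θ₃ = ∑ q ^ (x ^ 2)`, the sum running over all integers `x`. -/
noncomputable def theta3 (R : Type*) [CommRing R] : R⟦X⟧ :=
  PowerSeries.mk fun n ↦ (#(intSqrts n) : R)

/-- Jacobi's theta series `θ₄ = ∑ (-1) ^ x * q ^ (x ^ 2)`, encoded as `θ₃ (-q)`. -/
noncomputable def theta4 (R : Type*) [CommRing R] : R⟦X⟧ := rescale (-1) (theta3 R)

/-- The fourth power of Jacobi's `θ₂ = ∑ q ^ ((x + 1/2) ^ 2)`, encoded through Jacobi's
identity `θ₃ ^ 4 = θ₂ ^ 4 + θ₄ ^ 4`. -/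
noncomputable def theta2Pow4 (R : Type*) [CommRing R] : R⟦X⟧ := theta3 R ^ 4 - theta4 R ^ 4

/-- The part `θ₂ (q ^ 4) = ∑ q ^ (x ^ 2)` of `θ₃` coming from the odd integers `x`. -/
noncomputable def oddTheta (R : Type*) [CommRing R] : R⟦X⟧ :=
  theta3 R - expand 4 four_ne_zero (theta3 R)

lemma mem_intSqrts {n : ℕ} {x : ℤ} : x ∈ intSqrts n ↔ x ^ 2 = n := by
  simp only [intSqrts, mem_filter, mem_Icc, and_iff_right_iff_imp]
  intro h
  have hneg := Int.le_self_sq (-x)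
  rw [neg_sq] at hneg
  constructor <;> linarith [Int.le_self_sq x]

lemma mem_sumTwoSqReps {n : ℕ} {z : ℤ × ℤ} : z ∈ sumTwoSqReps n ↔ z.1 ^ 2 + z.2 ^ 2 = n := by
  simp only [sumTwoSqReps, mem_filter, mem_product, mem_Icc, and_iff_right_iff_imp]
  intro h
  have hneg₁ := Int.le_self_sq (-z.1)
  have hneg₂ := Int.le_self_sq (-z.2)
  rw [neg_sq] at hneg₁ hneg₂
  refine ⟨⟨?_, ?_⟩, ?_, ?_⟩ <;>
    linarith [sq_nonneg z.1, sq_nonneg z.2, Int.le_self_sq z.1, Int.le_self_sq z.2]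

lemma card_intSqrts_four_mul (n : ℕ) : #(intSqrts (4 * n)) = #(intSqrts n) := by
  refine (card_bij (fun x _ ↦ 2 * x) ?_ (by simp) ?_).symm
  · intro x hx
    rw [mem_intSqrts] at hx ⊢
    rw [mul_pow, hx]
    simp
  · intro y hy
    rw [mem_intSqrts] at hy
    have heven : Even (y ^ 2) := ⟨2 * n, by rw [hy]; push_cast; ring⟩
    obtain ⟨x, rfl⟩ := ((Int.even_pow' two_ne_zero).1 heven).two_dvd
    refine ⟨x, mem_intSqrts.2 ?_, rfl⟩
    push_cast at hy
    linarith

lemma card_sumTwoSqReps_two_mul (n : ℕ) : #(sumTwoSqReps (2 * n)) = #(sumTwoSqReps n) := by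
  refine (card_bij (fun z _ ↦ (z.1 + z.2, z.1 - z.2)) ?_ ?_ ?_).symm
  · intro z hz
    rw [mem_sumTwoSqReps] at hz ⊢
    push_cast
    linear_combination 2 * hz
  · rintro ⟨x, y⟩ _ ⟨x', y'⟩ _ h
    simp only [Prod.mk.injEq] at h ⊢
    lia
  · rintro ⟨u, v⟩ huv
    rw [mem_sumTwoSqReps] at huv
    have heven : Even (u ^ 2 + v ^ 2) := ⟨n, by rw [huv]; push_cast; ring⟩
    have hparity : Even (u + v) := by simpa [Int.even_add, Int.even_pow] using heven
    obtain ⟨x, hx⟩ := hparity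
    obtain rfl : u = 2 * x - v := by lia
    refine ⟨(x, x - v), mem_sumTwoSqReps.2 ?_, by simp; ring⟩
    push_cast at huv
    linarith

lemma card_sumTwoSqReps (n : ℕ) :
    #(sumTwoSqReps n) = ∑ ij ∈ antidiagonal n, #(intSqrts ij.1) * #(intSqrts ij.2) := by
  rw [card_eq_sum_card_fiberwise (f := fun z ↦ (z.1.natAbs ^ 2, z.2.natAbs ^ 2))
    (t := antidiagonal n)]
  · refine sum_congr rfl fun ⟨i, j⟩ hij ↦ ?_
    rw [← card_product]
    congr 1
    ext ⟨x, y⟩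
    rw [HasAntidiagonal.mem_antidiagonal] at hij
    simp only [mem_filter, mem_sumTwoSqReps, Prod.mk.injEq, mem_product, mem_intSqrts]
    zify
    rw [sq_abs, sq_abs, ← hij]
    push_cast
    exact ⟨And.right, fun h ↦ ⟨by rw [h.1, h.2], h⟩⟩
  · intro z hz
    rw [mem_coe, mem_sumTwoSqReps] at hz
    simp only [mem_coe, HasAntidiagonal.mem_antidiagonal]
    zify
    rwa [sq_abs, sq_abs]

variable {R : Type*} [CommRing R]

local notation "θ₃" => theta3 R
local notation "θ₄" => theta4 R
local notation "θ₂⁴" => theta2Pow4 R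
local notation "D" => eulerDerivation R

lemma coeff_theta3_sq (n : ℕ) : coeff n (θ₃ ^ 2) = (#(sumTwoSqReps n) : R) := by
  rw [sq, coeff_mul, card_sumTwoSqReps]
  simp [theta3]

lemma rescale_neg_one_theta4 : rescale (-1) θ₄ = θ₃ := by
  simp [theta4, rescale_rescale]

lemma constantCoeff_theta3 : constantCoeff θ₃ = 1 := by
  have hcard : #(intSqrts 0) = 1 := by decide
  simp [← coeff_zero_eq_constantCoeff_apply, theta3, hcard]

lemma constantCoeff_theta4 : constantCoeff θ₄ = 1 := by
  rw [← coeff_zero_eq_constantCoeff_apply, theta4, coeff_rescale, pow_zero, one_mul,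
    coeff_zero_eq_constantCoeff_apply, constantCoeff_theta3]

lemma coeff_one_theta3 : coeff 1 θ₃ = 2 := by
  have hcard : #(intSqrts 1) = 2 := by decide
  simp [theta3, hcard]

lemma coeff_one_theta4 : coeff 1 θ₄ = -2 := by
  rw [theta4, coeff_rescale, coeff_one_theta3]
  ring

lemma two_mul_expand_two_theta3_sq :
    2 * expand 2 two_ne_zero (θ₃ ^ 2) = θ₃ ^ 2 + θ₄ ^ 2 := by
  ext n
  rw [theta4, ← map_pow, map_add, coeff_rescale, ← map_ofNat (C (R := R)), coeff_C_mul,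
    coeff_expand]
  split_ifs with hn
  · obtain ⟨k, rfl⟩ := hn
    rw [Nat.mul_div_cancel_left k two_pos, coeff_theta3_sq, coeff_theta3_sq,
      card_sumTwoSqReps_two_mul, (even_two_mul k).neg_one_pow]
    ring
  · have hodd : Odd n := by rwa [← Nat.not_even_iff_odd, even_iff_two_dvd]
    rw [hodd.neg_one_pow]
    ring

lemma supportedOn_oddTheta : SupportedOn (1 : ZMod 8) (oddTheta R) := by
  intro n hn
  rw [oddTheta, map_sub, coeff_expand]
  split_ifs with h4
  · obtain ⟨k, rfl⟩ := h4
    simp [theta3, card_intSqrts_four_mul]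
  · have hempty : intSqrts n = ∅ := by
      refine eq_empty_of_forall_notMem fun x hx ↦ hn ?_
      rw [mem_intSqrts] at hx
      have hodd : Odd x := by
        rw [← Int.not_even_iff_odd]
        rintro ⟨y, rfl⟩
        exact h4 (Int.natCast_dvd_natCast.1 ⟨y ^ 2, by rw [← hx]; push_cast; ring⟩)
      have hdvd := Int.eight_dvd_sq_sub_one_of_odd hodd
      rw [hx] at hdvd
      simpa [sub_eq_zero] using (ZMod.intCast_zmod_eq_zero_iff_dvd (n - 1) 8).2 hdvd
    simp [theta3, hempty]

lemma theta3_eq : θ₃ = expand 4 four_ne_zero θ₃ + oddTheta R := by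
  rw [oddTheta, add_sub_cancel]

lemma theta4_eq : θ₄ = expand 4 four_ne_zero θ₃ - oddTheta R := by
  have heven : SupportedOn (0 : ZMod 2) (expand 4 four_ne_zero θ₃) :=
    map_zero (ZMod.castHom (by norm_num : 2 ∣ 4) (ZMod 2)) ▸
      (supportedOn_expand four_ne_zero θ₃).castHom _
  have hodd : SupportedOn (1 : ZMod 2) (oddTheta R) :=
    map_one (ZMod.castHom (by norm_num : 2 ∣ 8) (ZMod 2)) ▸ supportedOn_oddTheta.castHom _
  rw [theta4]
  conv_lhs => rw [theta3_eq]
  rw [map_add, heven.rescale_neg_one, hodd.rescale_neg_one_eq_neg, sub_eq_add_neg]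

lemma theta3_mul_theta4 :
    θ₃ * θ₄ = expand 4 four_ne_zero θ₃ ^ 2 - oddTheta R ^ 2 := by
  rw [theta4_eq]
  linear_combination (expand 4 four_ne_zero θ₃ - oddTheta R) * theta3_eq (R := R)

lemma four_mul_expand_two_theta3_pow_four :
    4 * expand 2 two_ne_zero (θ₃ ^ 4) = (θ₃ ^ 2 + θ₄ ^ 2) ^ 2 := by
  rw [← two_mul_expand_two_theta3_sq, mul_pow, ← map_pow]
  ring_nf

lemma two_le_order_wronskian_sub :
    2 ≤ (4 * (θ₄ * D θ₃ - θ₃ * D θ₄) - θ₂⁴ * θ₃ * θ₄).order := by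
  refine nat_le_order _ 2 fun i hi ↦ ?_
  interval_cases i
  · simp [theta2Pow4, constantCoeff_theta3, constantCoeff_theta4, constantCoeff_eulerDerivation]
  · rw [← map_ofNat (C (R := R)), map_sub, coeff_C_mul]
    simp [theta2Pow4, coeff_one_mul, coeff_one_pow, constantCoeff_theta3, constantCoeff_theta4,
      constantCoeff_eulerDerivation, coeff_one_theta3, coeff_one_theta4]
    ring

variable [IsDomain R] [NeZero (2 : R)]

lemma expand_two_theta3_sq :
    expand 2 two_ne_zero (θ₃ ^ 2) = expand 4 four_ne_zero θ₃ ^ 2 + oddTheta R ^ 2 := by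
  refine mul_left_cancel₀ (two_ne_zero' R⟦X⟧) ?_
  rw [two_mul_expand_two_theta3_sq, theta4_eq]
  nth_rw 1 [theta3_eq]
  ring

lemma expand_two_theta4_sq : expand 2 two_ne_zero (θ₄ ^ 2) = θ₃ * θ₄ := by
  have heven : SupportedOn (0 : ZMod 4) (expand 4 four_ne_zero θ₃ ^ 2) := by
    simpa using (supportedOn_expand four_ne_zero θ₃).pow 2
  have hodd : SupportedOn (2 : ZMod 4) (oddTheta R ^ 2) := by
    have h := (supportedOn_oddTheta (R := R).pow 2).castHom (by norm_num : 4 ∣ 8)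
    rwa [map_mul, map_natCast, map_one, mul_one] at h
  rw [theta3_mul_theta4, theta4, ← map_pow,
    expand_two_rescale_neg_one expand_two_theta3_sq heven hodd]

lemma four_mul_expand_two_theta2Pow4 :
    4 * expand 2 two_ne_zero θ₂⁴ = (θ₃ ^ 2 - θ₄ ^ 2) ^ 2 := by
  have h4 : expand 2 two_ne_zero (θ₄ ^ 4) = (θ₃ * θ₄) ^ 2 := by
    rw [← expand_two_theta4_sq, ← map_pow, ← pow_mul]
  rw [theta2Pow4, map_sub, mul_sub, four_mul_expand_two_theta3_pow_four, h4]
  ring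

lemma oddTheta_pow_four : oddTheta R ^ 4 = expand 4 four_ne_zero θ₂⁴ := by
  have h4 : (2 ^ 2 : R⟦X⟧) ≠ 0 := pow_ne_zero 2 two_ne_zero
  have h := congrArg (expand 2 two_ne_zero) (four_mul_expand_two_theta2Pow4 (R := R))
  rw [map_mul, map_ofNat, ← expand_mul, map_pow, map_sub, expand_two_theta3_sq,
    expand_two_theta4_sq, theta3_mul_theta4] at h
  refine mul_left_cancel₀ h4 ?_
  linear_combination -h

lemma four_mul_expand_two_theta3_mul_eulerDerivation :
    4 * expand 2 two_ne_zero (θ₃ * D θ₃) = θ₃ * D θ₃ + θ₄ * D θ₄ := by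
  have h := congrArg D (two_mul_expand_two_theta3_sq (R := R))
  rw [two_mul, map_add, map_add, eulerDerivation_expand] at h
  simp only [eulerDerivation_pow, map_mul, map_ofNat, Nat.cast_ofNat, pow_one,
    Nat.add_one_sub_one] at h
  refine mul_left_cancel₀ (two_ne_zero' R⟦X⟧) ?_
  rw [map_mul]
  linear_combination h

lemma four_mul_expand_two_theta4_mul_eulerDerivation :
    4 * expand 2 two_ne_zero (θ₄ * D θ₄) = θ₃ * D θ₄ + θ₄ * D θ₃ := by
  have h := congrArg D (expand_two_theta4_sq (R := R))
  rw [eulerDerivation_expand, eulerDerivation_mul] at h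
  simp only [eulerDerivation_pow, map_mul, map_ofNat, Nat.cast_ofNat, pow_one,
    Nat.add_one_sub_one] at h
  rw [map_mul]
  linear_combination h

lemma order_theta3_sq_sub_theta4_sq : (θ₃ ^ 2 - θ₄ ^ 2).order = 1 := by
  refine mod_cast order_eq_nat.2 ⟨?_, fun i hi ↦ ?_⟩
  · have hcoeff : coeff 1 (θ₃ ^ 2 - θ₄ ^ 2) = 2 ^ 3 := by
      rw [map_sub, coeff_one_pow, coeff_one_pow, constantCoeff_theta3, constantCoeff_theta4,
        coeff_one_theta3, coeff_one_theta4]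
      norm_num
    rw [hcoeff]
    exact pow_ne_zero 3 two_ne_zero
  · obtain rfl : i = 0 := by lia
    simp [constantCoeff_theta3, constantCoeff_theta4]

-- Under `q ↦ q ^ 2` the difference of the two sides gets multiplied by a series of order `1`, up to
-- a factor of order `0`, which is impossible for a nonzero series of order at least `2`.
lemma four_mul_wronskian_theta3_theta4 :
    4 * (θ₄ * D θ₃ - θ₃ * D θ₄) = θ₂⁴ * θ₃ * θ₄ := by
  have h₃ := four_mul_expand_two_theta3_mul_eulerDerivation (R := R)
  have h₄ := four_mul_expand_two_theta4_mul_eulerDerivation (R := R)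
  have h₂ := four_mul_expand_two_theta2Pow4 (R := R)
  have hsq₃ := two_mul_expand_two_theta3_sq (R := R)
  have hsq₄ := expand_two_theta4_sq (R := R)
  rw [← sub_eq_zero]
  refine eq_zero_of_mul_expand_eq_mul (m := 2) two_ne_zero
    (u := 2 ^ 3 * expand 2 two_ne_zero (θ₃ * θ₄)) (v := θ₃ ^ 2 - θ₄ ^ 2) ?_ ?_ ?_
  · simp only [map_mul, map_sub, map_pow, map_ofNat] at h₂ h₃ h₄ hsq₃ hsq₄ ⊢
    set a := expand 2 two_ne_zero θ₃
    set b := expand 2 two_ne_zero θ₄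
    have hprod : 8 * a ^ 2 * b ^ 2 * expand 2 two_ne_zero θ₂⁴
        = (θ₃ ^ 2 + θ₄ ^ 2) * (θ₃ * θ₄) * (θ₃ ^ 2 - θ₄ ^ 2) ^ 2 := by
      rw [← hsq₃, ← hsq₄, ← h₂]
      ring
    rw [theta2Pow4] at hprod ⊢
    linear_combination 8 * b ^ 2 * h₃ + 8 * (θ₃ * D θ₃ + θ₄ * D θ₄) * hsq₄ - 8 * a ^ 2 * h₄
      - 4 * (θ₃ * D θ₄ + θ₄ * D θ₃) * hsq₃ - hprod
  · rw [map_mul, map_pow, map_ofNat, constantCoeff_expand, map_mul, constantCoeff_theta3,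
      constantCoeff_theta4, mul_one, mul_one]
    exact pow_ne_zero 3 two_ne_zero
  · rw [order_theta3_sq_sub_theta4_sq, Nat.add_one_sub_one, Nat.cast_one, one_mul]
    exact lt_of_lt_of_le (by norm_num) two_le_order_wronskian_sub

end ThetaSeries

section Cartier

variable {p : ℕ} [hp : Fact p.Prime]

local notation "D" => eulerDerivation (ZMod p)

lemma expand_prime_eq_pow (f : (ZMod p)⟦X⟧) : expand p hp.out.ne_zero f = f ^ p := by
  have h := MvPowerSeries.map_frobenius_expand p (f := f) hp.out.ne_zero
  rw [ZMod.frobenius_zmod] at h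
  rw [← h]
  rfl

lemma atkinU_pow_mul (f g : (ZMod p)⟦X⟧) : atkinU p (f ^ p * g) = f * atkinU p g := by
  rw [← expand_prime_eq_pow, atkinU_expand_mul]

lemma atkinU_eulerDerivation (f : (ZMod p)⟦X⟧) : atkinU p (D f) = 0 := by
  ext n
  simp

lemma atkinU_pow_pred_mul_eulerDerivation (f : (ZMod p)⟦X⟧) :
    atkinU p (f ^ (p - 1) * D f) = D f := by
  obtain ⟨F, rfl⟩ := map_surjective (Int.castRingHom (ZMod p)) ZMod.intCast_surjective f
  have hlift (n : ℕ) : coeff (p * n) (F ^ (p - 1) * eulerDerivation ℤ F)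
      = n * coeff (p * n) (F ^ p) := by
    have h := congrArg (coeff (p * n)) (eulerDerivation_pow F p)
    rw [coeff_eulerDerivation, mul_assoc, ← map_natCast (C (R := ℤ)), coeff_C_mul] at h
    refine mul_left_cancel₀ (Nat.cast_ne_zero.2 hp.out.ne_zero : (p : ℤ) ≠ 0) ?_
    rw [← h]
    push_cast
    ring
  ext n
  rw [coeff_atkinU, eulerDerivation_map, ← map_pow, ← map_mul, coeff_map, hlift, map_mul,
    ← coeff_map, map_pow, ← expand_prime_eq_pow]
  simp [coeff_expand_mul]

lemma atkinU_eq_self_of_eulerDerivation_eq_mul {s w : (ZMod p)⟦X⟧} (hs : s ≠ 0)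
    (hw : D s = s * w) : atkinU p w = w := by
  refine mul_left_cancel₀ hs ?_
  rw [← atkinU_pow_mul, ← hw, ← atkinU_pow_pred_mul_eulerDerivation s, hw, ← mul_assoc,
    ← pow_succ, Nat.sub_add_cancel hp.out.one_le]

lemma atkinU_pow_mul_eq_zero_of_eulerDerivation_eq_mul {s w : (ZMod p)⟦X⟧} (hw : D s = s * w)
    {k : ℕ} (hk : ¬p ∣ k) : atkinU p (s ^ k * w) = 0 := by
  have hk₀ : (k : ZMod p) ≠ 0 := by rwa [Ne, ZMod.natCast_eq_zero_iff]
  have hk₁ : 1 ≤ k := Nat.one_le_iff_ne_zero.2 fun h ↦ hk (h ▸ dvd_zero p)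
  have hD : D (s ^ k) = (k : ZMod p) • (s ^ k * w) := by
    rw [eulerDerivation_pow, hw, Nat.cast_smul_eq_nsmul, nsmul_eq_mul, mul_assoc,
      ← mul_assoc _ s, ← pow_succ, Nat.sub_add_cancel hk₁]
  have h := atkinU_eulerDerivation (s ^ k)
  rw [hD, map_smul] at h
  exact (smul_eq_zero.1 h).resolve_left hk₀

lemma atkinU_aeval_mul {s w : (ZMod p)⟦X⟧} (hs : s ≠ 0) (hw : D s = s * w)
    (P : Polynomial (ZMod p)) :
    atkinU p (Polynomial.aeval s P * w) = Polynomial.aeval s (P.contract p) * w := by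
  have hp₀ := hp.out.ne_zero
  induction P using Polynomial.induction_on' with
  | add P Q hP hQ => simp only [Polynomial.contract_add hp₀, map_add, add_mul, hP, hQ]
  | monomial k c =>
    rw [Polynomial.aeval_monomial, ← Algebra.smul_def, smul_mul_assoc, map_smul]
    by_cases hk : p ∣ k
    · obtain ⟨j, rfl⟩ := hk
      have hcontract : (Polynomial.monomial (p * j) c).contract p = Polynomial.monomial j c := by
        ext i
        simp [Polynomial.coeff_contract hp₀, Polynomial.coeff_monomial, mul_comm i p, hp₀]
      rw [hcontract, Polynomial.aeval_monomial, ← Algebra.smul_def, smul_mul_assoc, pow_mul',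
        atkinU_pow_mul, atkinU_eq_self_of_eulerDerivation_eq_mul hs hw]
    · have hcontract : (Polynomial.monomial k c).contract p = 0 := by
        ext i
        rw [Polynomial.coeff_contract hp₀, Polynomial.coeff_monomial, if_neg,
          Polynomial.coeff_zero]
        exact fun h ↦ hk ⟨i, by rw [h, mul_comm]⟩
      rw [hcontract, map_zero, zero_mul, atkinU_pow_mul_eq_zero_of_eulerDerivation_eq_mul hw hk,
        smul_zero]

end Cartier

section ModularLambda

variable (K : Type*) [Field K]

/-- The modular function `λ = θ₂ ^ 4 / θ₃ ^ 4`. -/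
noncomputable def modularLambda : K⟦X⟧ := theta2Pow4 K * (theta3 K ^ 4)⁻¹

variable {K}

local notation "θ₃" => theta3 K
local notation "θ₄" => theta4 K
local notation "θ₂⁴" => theta2Pow4 K
local notation "D" => eulerDerivation K

lemma theta3_ne_zero : θ₃ ≠ 0 := fun h ↦ by
  simpa [h] using constantCoeff_theta3 (R := K)

lemma theta3_pow_four_mul_modularLambda : θ₃ ^ 4 * modularLambda K = θ₂⁴ := by
  rw [modularLambda, mul_left_comm, PowerSeries.mul_inv_cancel, mul_one]
  simp [constantCoeff_theta3]

lemma theta3_pow_four_mul_one_sub_modularLambda : θ₃ ^ 4 * (1 - modularLambda K) = θ₄ ^ 4 := by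
  rw [mul_sub, theta3_pow_four_mul_modularLambda, theta2Pow4]
  ring

variable [NeZero (2 : K)]

lemma modularLambda_ne_zero : modularLambda K ≠ 0 := by
  intro h
  have hcoeff : coeff 1 θ₂⁴ = (2 : K) ^ 4 := by
    rw [theta2Pow4, map_sub, coeff_one_pow, coeff_one_pow, constantCoeff_theta3,
      constantCoeff_theta4, coeff_one_theta3, coeff_one_theta4]
    norm_num
  rw [← theta3_pow_four_mul_modularLambda, h, mul_zero, map_zero] at hcoeff
  exact pow_ne_zero 4 two_ne_zero hcoeff.symm

lemma eulerDerivation_modularLambda : D (modularLambda K) = modularLambda K * θ₄ ^ 4 := by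
  have hlam := theta3_pow_four_mul_modularLambda (K := K)
  have hsub := theta3_pow_four_mul_one_sub_modularLambda (K := K)
  have h := congrArg D hlam
  rw [eulerDerivation_mul, theta2Pow4, map_sub, eulerDerivation_pow, eulerDerivation_pow] at h
  norm_num at h
  refine mul_left_cancel₀ (pow_ne_zero 5 theta3_ne_zero) ?_
  linear_combination θ₃ * h + θ₄ ^ 3 * four_mul_wronskian_theta3_theta4 (R := K)
    + 4 * D θ₃ * hsub - θ₃ * θ₄ ^ 4 * hlam

end ModularLambda

section GaussIdentity

variable {R : Type*} [CommRing R]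

/-- Half the difference between `∏ (1 + q ^ i) * ∑ (-1) ^ s * q ^ (s ^ 2)` and `∏ (1 - q ^ i)`, for
the products over `1 ≤ i ≤ n` and the sum over `|s| ≤ n`. -/
def gaussRemainder (q : R) (n : ℕ) : R :=
  ∑ s ∈ range n, (-1) ^ (s + 1) * (q ^ (n + 1)) ^ (s + 1) *
    ((∏ i ∈ Ico (s + 1) n, (1 - q ^ (i + 1))) * ∏ i ∈ range s, (1 + q ^ (i + 1)))

lemma gaussRemainder_succ (q : R) (n : ℕ) :
    gaussRemainder q (n + 1) = (1 + q ^ (n + 1)) * gaussRemainder q n +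
      q ^ (n + 1) * ∏ i ∈ range n, (1 - q ^ (i + 1)) +
        (-1) ^ (n + 1) * q ^ (n + 1) ^ 2 * ∏ i ∈ range (n + 1), (1 + q ^ (i + 1)) := by
  let A (s : ℕ) : R := ∏ i ∈ range s, (1 + q ^ (i + 1))
  let B (s : ℕ) : R := ∏ i ∈ Ico s n, (1 - q ^ (i + 1))
  let Z (s : ℕ) : R := (-1) ^ s * (q ^ (n + 1)) ^ (s + 1) * (B s * A s)
  have hA (s : ℕ) : A (s + 1) = A s * (1 + q ^ (s + 1)) := prod_range_succ _ _
  have htelescope : ∑ s ∈ range n, (-1) ^ (s + 1) * (q ^ (n + 1 + 1)) ^ (s + 1) *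
      ((∏ i ∈ Ico (s + 1) (n + 1), (1 - q ^ (i + 1))) * A s) =
        (1 + q ^ (n + 1)) * gaussRemainder q n - (Z n - Z 0) := by
    rw [← sum_range_sub Z, gaussRemainder, mul_sum, ← sum_sub_distrib]
    refine sum_congr rfl fun s hs ↦ ?_
    have hB : B s = (1 - q ^ (s + 1)) * B (s + 1) :=
      prod_eq_prod_Ico_succ_bot (mem_range.1 hs) _
    rw [prod_Ico_succ_top (mem_range.1 hs)]
    simp only [Z, hA, hB, A, B]
    ring
  have hZ₀ : Z 0 = q ^ (n + 1) * ∏ i ∈ range n, (1 - q ^ (i + 1)) := by simp [Z, A, B]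
  have hZ : Z n = (-1) ^ n * (q ^ (n + 1)) ^ (n + 1) * A n := by simp [Z, B]
  rw [gaussRemainder, sum_range_succ, htelescope, hZ₀, hZ, Ico_self, prod_empty, prod_range_succ]
  ring

lemma prod_one_add_pow_mul_sum_neg_one_pow_mul_pow_sq (q : R) (n : ℕ) :
    (∏ i ∈ range n, (1 + q ^ (i + 1))) *
        (1 + 2 * ∑ s ∈ range n, (-1) ^ (s + 1) * q ^ (s + 1) ^ 2) =
      ∏ i ∈ range n, (1 - q ^ (i + 1)) + 2 * gaussRemainder q n := by
  induction n with
  | zero => simp [gaussRemainder]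
  | succ n ih =>
    rw [gaussRemainder_succ, sum_range_succ, prod_range_succ, prod_range_succ]
    linear_combination (1 + q ^ (n + 1)) * ih

lemma pow_dvd_gaussRemainder (q : R) (n : ℕ) : q ^ (n + 1) ∣ gaussRemainder q n :=
  dvd_sum fun s _ ↦ ((dvd_pow_self _ s.succ_ne_zero).mul_left _).mul_right _

lemma coeff_one_add_two_mul_sum_X_pow_sq {d n : ℕ} (hd : d ≤ n) :
    coeff d (1 + 2 * ∑ s ∈ range n, X ^ (s + 1) ^ 2 : R⟦X⟧) = coeff d (theta3 R) := by
  have hsqrts : intSqrts d = {x ∈ Icc (-n : ℤ) n | d = x.natAbs ^ 2} := by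
    ext x
    rw [mem_intSqrts, mem_filter, mem_Icc]
    zify
    rw [sq_abs]
    refine ⟨fun h ↦ ⟨?_, h.symm⟩, fun h ↦ h.2.symm⟩
    have hneg := Int.le_self_sq (-x)
    rw [neg_sq] at hneg
    constructor <;> linarith [Int.le_self_sq x, (Nat.cast_le (α := ℤ)).2 hd]
  have heven : Function.Even fun x : ℤ ↦ (X ^ x.natAbs ^ 2 : R⟦X⟧) := fun x ↦ by
    simp
  have hsum := sum_Icc_of_even_eq_range heven n
  rw [sum_range_succ'] at hsum
  have hsum_Icc : (1 + 2 * ∑ s ∈ range n, X ^ (s + 1) ^ 2 : R⟦X⟧) =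
      ∑ x ∈ Icc (-n : ℤ) n, X ^ x.natAbs ^ 2 := by
    simp only [hsum, Int.natAbs_natCast, Int.natAbs_zero]
    ring
  rw [hsum_Icc, map_sum, theta3, coeff_mk, hsqrts, card_filter, Nat.cast_sum]
  simp only [coeff_X_pow, Nat.cast_ite, Nat.cast_one, Nat.cast_zero]

section Topology

open Filter Topology PowerSeries.WithPiTopology

variable [TopologicalSpace R]

lemma tendsto_one_add_two_mul_sum_neg_one_pow_mul_X_pow_sq :
    Tendsto (fun n ↦ (1 + 2 * ∑ s ∈ range n, (-1) ^ (s + 1) * X ^ (s + 1) ^ 2 : R⟦X⟧)) atTop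
      (𝓝 (theta4 R)) := by
  have hrescale (n : ℕ) : (1 + 2 * ∑ s ∈ range n, (-1) ^ (s + 1) * X ^ (s + 1) ^ 2 : R⟦X⟧) =
      rescale (-1) (1 + 2 * ∑ s ∈ range n, X ^ (s + 1) ^ 2) := by
    have hsq (s : ℕ) : ((-1) ^ (s ^ 2) : R⟦X⟧) = (-1) ^ s := by
      rw [sq, pow_mul]
      rcases Nat.even_or_odd s with hs | hs <;> simp [hs.neg_one_pow]
    simp only [map_add, map_one, map_mul, map_ofNat, map_sum, map_pow, rescale_X, map_neg,
      neg_one_mul, neg_pow X, hsq]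
  refine (tendsto_iff_coeff_tendsto _ _ _ _).2 fun d ↦
    tendsto_atTop_of_eventually_const (i₀ := d) fun n hn ↦ ?_
  rw [hrescale, coeff_rescale, coeff_one_add_two_mul_sum_X_pow_sq hn, theta4, coeff_rescale]

lemma tendsto_gaussRemainder_X : Tendsto (gaussRemainder (X : R⟦X⟧)) atTop (𝓝 0) := by
  refine (tendsto_iff_coeff_tendsto _ _ _ _).2 fun d ↦
    tendsto_atTop_of_eventually_const (i₀ := d) fun n hn ↦ ?_
  exact X_pow_dvd_iff.1 (pow_dvd_gaussRemainder X n) d (by lia)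

end Topology

open PowerSeries.WithPiTopology

variable (R)

lemma mk_card_distincts_mul_theta4 :
    PowerSeries.mk (fun n ↦ (#(Nat.Partition.distincts n) : R)) * theta4 R =
      pentagonalSeries R := by
  let _ : TopologicalSpace R := ⊥
  have _ : DiscreteTopology R := ⟨rfl⟩
  have hdistincts := Nat.Partition.hasProd_powerSeriesMk_card_countRestricted R two_pos
  have hfactor (i : ℕ) : ∑ j ∈ range 2, (X : R⟦X⟧) ^ ((i + 1) * j) = 1 + X ^ (i + 1) := by
    simp [sum_range_succ]
  simp only [Nat.Partition.countRestricted_two, hfactor] at hdistincts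
  have hlhs := hdistincts.tendsto_prod_nat.mul
    tendsto_one_add_two_mul_sum_neg_one_pow_mul_X_pow_sq
  have hrhs := (hasProd_one_sub_X_pow R).tendsto_prod_nat.add
    ((tendsto_gaussRemainder_X (R := R)).const_mul 2)
  simp only [prod_one_add_pow_mul_sum_neg_one_pow_mul_pow_sq] at hlhs
  rw [mul_zero, add_zero] at hrhs
  exact tendsto_nhds_unique hlhs hrhs

lemma mk_card_partition_mul_pentagonalSeries :
    PowerSeries.mk (fun n ↦ (Fintype.card (Nat.Partition n) : R)) * pentagonalSeries R = 1 := by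
  let _ : TopologicalSpace R := ⊥
  have _ : DiscreteTopology R := ⟨rfl⟩
  have hpartition := Nat.Partition.hasProd_powerSeriesMk_card_restricted R fun _ ↦ True
  have hprod := hpartition.mul (hasProd_one_sub_X_pow R)
  have hgeom (i : ℕ) : (∑' j : ℕ, X ^ ((i + 1) * j)) * (1 - X ^ (i + 1)) = (1 : R⟦X⟧) := by
    simp only [pow_mul]
    exact tsum_pow_mul_one_sub_of_constantCoeff_eq_zero (by simp)
  simp only [if_true, hgeom, Nat.Partition.restricted, implies_true, filter_true, card_univ]
    at hprod
  exact hprod.unique hasProd_one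

lemma mk_overpartition_mul_theta4 :
    PowerSeries.mk (fun n ↦ (overpartition n : R)) * theta4 R = 1 := by
  have hmul : PowerSeries.mk (fun n ↦ (overpartition n : R)) =
      PowerSeries.mk (fun n ↦ (Fintype.card (Nat.Partition n) : R)) *
        PowerSeries.mk fun n ↦ (#(Nat.Partition.distincts n) : R) := by
    ext n
    rw [mul_comm, coeff_mul, Finset.Nat.sum_antidiagonal_eq_sum_range_succ_mk]
    simp [overpartition]
  rw [hmul, mul_assoc, mk_card_distincts_mul_theta4, mk_card_partition_mul_pentagonalSeries]

end GaussIdentity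

section ThetaQuadratic

variable {R : Type*} [CommRing R]

/-- The general form of weight `4` in the ring generated by `θ₃ ^ 4` and `θ₂ ^ 4`. -/
noncomputable def thetaQuadratic (α β γ : R) : R⟦X⟧ :=
  C α * theta3 R ^ 8 + C β * (theta3 R ^ 4 * theta2Pow4 R) + C γ * theta2Pow4 R ^ 2

local notation "θ₃" => theta3 R
local notation "θ₄" => theta4 R
local notation "θ₂⁴" => theta2Pow4 R

lemma rescale_neg_one_thetaQuadratic (α β γ : R) :
    rescale (-1) (thetaQuadratic α β γ) = thetaQuadratic α (-(2 * α + β)) (α + β + γ) := by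
  have hC (c : R) : rescale (-1) (C c) = C c := by
    ext n
    rcases eq_or_ne n 0 with rfl | hn <;> simp_all [coeff_rescale, coeff_C]
  simp only [thetaQuadratic, theta2Pow4, map_add, map_mul, map_sub, map_neg, map_pow, map_ofNat,
    hC, rescale_neg_one_theta4]
  rw [show rescale (-1) θ₃ = θ₄ from rfl]
  ring

lemma supportedOn_oddTheta_pow_mul_expand (k : ℕ) (g : R⟦X⟧) :
    SupportedOn (k : ZMod 4) (oddTheta R ^ k * expand 4 four_ne_zero g) := by
  have hpow := (supportedOn_oddTheta (R := R).pow k).castHom (by norm_num : 4 ∣ 8)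
  simpa using hpow.mul (supportedOn_expand four_ne_zero g)

variable [IsDomain R] [NeZero (2 : R)]

lemma theta3_pow_three_mul_thetaQuadratic (α β γ : R) :
    θ₃ ^ 3 * thetaQuadratic α β γ =
      expand 4 four_ne_zero (θ₃ ^ 3 * thetaQuadratic α
        (330 * α + 336 * β + 320 * γ) (165 * α + 176 * β + 192 * γ)) +
      oddTheta R ^ 1 * expand 4 four_ne_zero (θ₃ ^ 2 * thetaQuadratic
        (11 * α + 8 * β) (462 * α + 448 * β + 448 * γ) (55 * α + 56 * β + 64 * γ)) +
      oddTheta R ^ 2 * expand 4 four_ne_zero (θ₃ * thetaQuadratic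
        (55 * α + 56 * β + 64 * γ) (462 * α + 448 * β + 448 * γ) (11 * α + 8 * β)) +
      oddTheta R ^ 3 * expand 4 four_ne_zero (thetaQuadratic
        (165 * α + 176 * β + 192 * γ) (330 * α + 336 * β + 320 * γ) α) := by
  have hθ₂ : θ₂⁴ = 8 * expand 4 four_ne_zero θ₃ ^ 3 * oddTheta R +
      8 * expand 4 four_ne_zero θ₃ * oddTheta R ^ 3 := by
    rw [theta2Pow4, theta4_eq]
    nth_rw 1 [theta3_eq]
    ring
  simp only [thetaQuadratic, map_add, map_mul, map_pow, map_ofNat, expand_C, ← oddTheta_pow_four]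
  rw [hθ₂]
  set E := expand 4 four_ne_zero θ₃ with hE
  rw [theta3_eq, ← hE]
  ring

lemma atkinU_four_theta3_pow_three_mul_thetaQuadratic (α β γ : R) :
    atkinU 4 (θ₃ ^ 3 * thetaQuadratic α β γ) = θ₃ ^ 3 * thetaQuadratic α
      (330 * α + 336 * β + 320 * γ) (165 * α + 176 * β + 192 * γ) := by
  have hne (k : ℕ) (hk : ¬4 ∣ k) : (k : ZMod 4) ≠ 0 := by rwa [Ne, ZMod.natCast_eq_zero_iff]
  rw [theta3_pow_three_mul_thetaQuadratic]
  simp only [map_add]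
  rw [(supportedOn_oddTheta_pow_mul_expand 1 _).atkinU_eq_zero (hne 1 (by norm_num)),
    (supportedOn_oddTheta_pow_mul_expand 2 _).atkinU_eq_zero (hne 2 (by norm_num)),
    (supportedOn_oddTheta_pow_mul_expand 3 _).atkinU_eq_zero (hne 3 (by norm_num)),
    atkinU_expand, add_zero, add_zero, add_zero]

lemma coeff_theta3_pow_three_mul_thetaQuadratic_eq_zero {α β γ : R}
    (h : rescale (-1) (thetaQuadratic
        (165 * α + 176 * β + 192 * γ) (330 * α + 336 * β + 320 * γ) α) =
      thetaQuadratic (165 * α + 176 * β + 192 * γ) (330 * α + 336 * β + 320 * γ) α) (n : ℕ) :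
    coeff (8 * n + 7) (θ₃ ^ 3 * thetaQuadratic α β γ) = 0 := by
  have hfour (k : ℕ) (hk : k < 3) : ((8 * n + 7 : ℕ) : ZMod 4) ≠ k :=
    mt (ZMod.natCast_eq_natCast_iff' _ _ 4).1 (by lia)
  have height : ((8 * n + 7 : ℕ) : ZMod 8) ≠ (3 : ℕ) * 1 + 0 := by
    simpa using mt (ZMod.natCast_eq_natCast_iff' (8 * n + 7) 3 8).1 (by lia)
  rw [theta3_pow_three_mul_thetaQuadratic, map_add, map_add, map_add,
    supportedOn_expand _ _ _ (mod_cast hfour 0 (by norm_num)),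
    supportedOn_oddTheta_pow_mul_expand 1 _ _ (hfour 1 (by norm_num)),
    supportedOn_oddTheta_pow_mul_expand 2 _ _ (hfour 2 (by norm_num)),
    (supportedOn_oddTheta.pow 3).mul (supportedOn_expand_of_rescale_neg_one four_ne_zero h) _
      height, add_zero, add_zero, add_zero]

end ThetaQuadratic

section ModThirteen

instance {R : Type*} [CommRing R] (p : ℕ) [CharP R p] : CharP R⟦X⟧ p :=
  charP_of_injective_ringHom (C_injective (R := R)) p

instance : Fact (Nat.Prime 13) := ⟨by norm_num⟩

instance : NeZero (2 : ZMod 13) := ⟨by decide⟩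

local notation "θ₃" => theta3 (ZMod 13)
local notation "θ₄" => theta4 (ZMod 13)
local notation "θ₂⁴" => theta2Pow4 (ZMod 13)

lemma hasseForm_theta : hasseForm 6 (θ₃ ^ 4) θ₂⁴ = 1 := by
  have hfour : (4 : (ZMod 13)⟦X⟧) ^ 6 = 1 := by grind
  have hfixed : expand 2 two_ne_zero (hasseForm 6 (θ₃ ^ 4) θ₂⁴) = hasseForm 6 (θ₃ ^ 4) θ₂⁴ := by
    rw [map_hasseForm, ← one_mul (hasseForm _ _ _), ← hfour, ← hasseForm_mul_mul,
      four_mul_expand_two_theta3_pow_four, four_mul_expand_two_theta2Pow4,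
      hasseForm_add_sq_sub_sq, theta2Pow4]
    ring_nf
  have hconst : constantCoeff (hasseForm 6 (θ₃ ^ 4) θ₂⁴) = 1 := by
    rw [map_hasseForm, theta2Pow4]
    simp only [map_sub, map_pow, constantCoeff_theta3, constantCoeff_theta4, one_pow, sub_self]
    decide
  rw [eq_C_of_expand_eq_self one_lt_two hfixed, hconst, map_one]

lemma theta4_pow_twelve :
    θ₄ ^ 12 = (θ₃ ^ 8) ^ 13 * (Polynomial.aeval (modularLambda (ZMod 13))
      ((1 - Polynomial.X) ^ 2 * hasseForm 6 1 Polynomial.X ^ 4 : Polynomial (ZMod 13)) *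
        θ₄ ^ 4) := by
  have hH : (θ₃ ^ 4) ^ 6 * hasseForm 6 1 (modularLambda (ZMod 13)) = 1 := by
    rw [← hasseForm_mul_mul, mul_one, theta3_pow_four_mul_modularLambda, hasseForm_theta]
  simp only [map_mul, map_pow, map_sub, map_one, Polynomial.aeval_X, map_hasseForm]
  set H := hasseForm 6 1 (modularLambda (ZMod 13))
  calc θ₄ ^ 12 = (θ₄ ^ 4) ^ 2 * θ₄ ^ 4 * ((θ₃ ^ 4) ^ 6 * H) ^ 4 := by rw [hH]; ring
    _ = _ := by rw [← theta3_pow_four_mul_one_sub_modularLambda]; ring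

lemma atkinU_inv_theta4 :
    atkinU 13 θ₄⁻¹ = θ₄ ^ 3 * thetaQuadratic 1 1 1 := by
  have hinv : θ₄ * θ₄⁻¹ = 1 := PowerSeries.mul_inv_cancel _ (by simp [constantCoeff_theta4])
  have hne : θ₄ ≠ 0 := left_ne_zero_of_mul_eq_one hinv
  refine mul_left_cancel₀ hne ?_
  rw [← atkinU_pow_mul, pow_succ, mul_assoc, hinv, mul_one, theta4_pow_twelve, atkinU_pow_mul,
    atkinU_aeval_mul modularLambda_ne_zero eulerDerivation_modularLambda,
    contract_one_sub_X_sq_mul_hasseForm_pow_four]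
  simp only [thetaQuadratic, map_add, map_one, map_pow, Polynomial.aeval_X,
    ← theta3_pow_four_mul_modularLambda]
  ring

lemma coeff_inv_theta4 (n : ℕ) : coeff (13 * 2 ^ 6 * (8 * n + 7)) θ₄⁻¹ = 0 := by
  have hiterate : atkinU 4 (atkinU 4 (atkinU 4 (atkinU 13 θ₄⁻¹))) =
      θ₃ ^ 3 * thetaQuadratic 1 4 1 := by
    rw [atkinU_inv_theta4, ← atkinU_rescale_neg_one (by decide) (θ₄ ^ 3 * thetaQuadratic 1 1 1),
      map_mul, map_pow, rescale_neg_one_theta4, rescale_neg_one_thetaQuadratic]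
    simp only [atkinU_four_theta3_pow_three_mul_thetaQuadratic]
    congr 2
  rw [show 13 * 2 ^ 6 * (8 * n + 7) = 13 * (4 * (4 * (4 * (8 * n + 7)))) by ring]
  simp only [← coeff_atkinU]
  rw [hiterate]
  refine coeff_theta3_pow_three_mul_thetaQuadratic_eq_zero ?_ n
  rw [rescale_neg_one_thetaQuadratic]
  congr 1

end ModThirteen

theorem overpartition_thirteen_congruence (n : ℕ) :
    13 ∣ overpartition (13 * 2 ^ 6 * (8 * n + 7)) := by
  have hθ₄ : constantCoeff (theta4 (ZMod 13)) ≠ 0 := by simp [constantCoeff_theta4]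
  have hgen : PowerSeries.mk (fun k ↦ (overpartition k : ZMod 13)) = (theta4 (ZMod 13))⁻¹ :=
    (PowerSeries.eq_inv_iff_mul_eq_one hθ₄).2 (mk_overpartition_mul_theta4 (ZMod 13))
  rw [← ZMod.natCast_eq_zero_iff, ← coeff_inv_theta4 n, ← hgen, coeff_mk]
end
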